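/- arXiv:math/0610780 — 7 statements merged into one kernel-verified Lean document; each statement's English description precedes it below -/
import Mathlib

section
/- For n ≥ 2, the open set B = {x ∈ ℝ^n : x_1 > x_2 > ⋯ > x_n > x_1 − 1} is a connected component of the complement of the union of the hyperplanes of the Shi arrangement S_n. -/
/-!
The set in question is cut out by the inequalities `0 < x i - x j < 1` for `i < j`, so it is
convex, hence connected, and it lies in the complement of the arrangement; this puts it inside
one connected component. Conversely, on a connected component each difference `x i - x j`
(`i < j`) takes values in an interval avoiding `0` and `1`; since this interval meets `(0, 1)`,
it is contained in `(0, 1)`.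
-/

/-- The complement of the union of the hyperplanes of the Shi arrangement `S_n`:
the hyperplanes are `x i - x j = c` for `i < j` and `c ∈ {0, 1}`. -/
def shiComp (n : ℕ) : Set (Fin n → ℝ) :=
  {x | ∀ i j : Fin n, i < j → x i - x j ≠ 0 ∧ x i - x j ≠ 1}

/-- A region of the Shi arrangement: a connected component of the complement of
the union of the hyperplanes. -/
def IsShiRegion (n : ℕ) (R : Set (Fin n → ℝ)) : Prop :=
  ∃ x ∈ shiComp n, R = connectedComponentIn (shiComp n) x

/-- The base region, with `a` and `b` the first and last index, is cut out by all the
inequalities `0 < x i - x j < 1` for `i < j`: the largest difference is `x a - x b`. -/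
lemma baseRegion_eq {n : ℕ} {a b : Fin n} (ha : ∀ i, a ≤ i) (hb : ∀ i, i ≤ b) (hab : a < b) :
    {x : Fin n → ℝ | (∀ i j : Fin n, i < j → x j < x i) ∧ x a - 1 < x b} =
      {x | ∀ i j : Fin n, i < j → x i - x j ∈ Set.Ioo (0 : ℝ) 1} := by
  ext x
  constructor
  · rintro ⟨hx, hlast⟩ i j hij
    have hanti : Antitone x := (show StrictAnti x from fun i j h => hx i j h).antitone
    have h0 : x i ≤ x a := hanti (ha i)
    have h1 : x b ≤ x j := hanti (hb j)
    have := hx i j hij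
    constructor <;> linarith
  · intro h
    exact ⟨fun i j hij => by linarith [(h i j hij).1], by linarith [(h a b hab).2]⟩

lemma convex_differences_mem_Ioo (n : ℕ) :
    Convex ℝ {x : Fin n → ℝ | ∀ i j : Fin n, i < j → x i - x j ∈ Set.Ioo (0 : ℝ) 1} := by
  intro x hx y hy a b ha hb hab i j hij
  have h := convex_Ioo (0 : ℝ) 1 (hx i j hij) (hy i j hij) ha hb hab
  have e : (a • x + b • y) i - (a • x + b • y) j = a • (x i - x j) + b • (y i - y j) := by
    simp only [Pi.add_apply, Pi.smul_apply, smul_eq_mul]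
    ring
  rw [e]
  exact h

/-- The open set `{x : x_1 > x_2 > ⋯ > x_n > x_1 - 1}` is a connected component of
the complement of the union of the hyperplanes of the Shi arrangement. -/
theorem base_region_is_shi_region (n : ℕ) (hn : 2 ≤ n) :
    IsShiRegion n {x : Fin n → ℝ |
      (∀ i j : Fin n, i < j → x j < x i) ∧
        x ⟨0, by omega⟩ - 1 < x ⟨n - 1, by omega⟩} := by
  rw [baseRegion_eq (fun i => Fin.le_def.2 (Nat.zero_le _))
    (fun i => Fin.le_def.2 (Nat.le_sub_one_of_lt i.2)) (Fin.mk_lt_mk.2 (by omega))]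
  have hsub : {x : Fin n → ℝ | ∀ i j : Fin n, i < j → x i - x j ∈ Set.Ioo (0 : ℝ) 1} ⊆
      shiComp n := fun x hx i j hij => ⟨(hx i j hij).1.ne', (hx i j hij).2.ne⟩
  -- A base point: coordinates decreasing in steps of `1 / n`.
  obtain ⟨p, hp⟩ : ∃ p : Fin n → ℝ, ∀ i j : Fin n, i < j → p i - p j ∈ Set.Ioo (0 : ℝ) 1 := by
    refine ⟨fun i => -((i : ℕ) : ℝ) / n, fun i j hij => ?_⟩
    have hn0 : (0 : ℝ) < n := by exact_mod_cast (by omega : 0 < n)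
    have h1 : ((i : ℕ) : ℝ) < (j : ℕ) := by exact_mod_cast hij
    have h2 : ((j : ℕ) : ℝ) < n := by exact_mod_cast j.2
    have h3 : (0 : ℝ) ≤ (i : ℕ) := Nat.cast_nonneg _
    have e : -((i : ℕ) : ℝ) / n - -((j : ℕ) : ℝ) / n = (((j : ℕ) : ℝ) - (i : ℕ)) / n := by ring
    simp only [e, Set.mem_Ioo]
    exact ⟨div_pos (by linarith) hn0, (div_lt_one hn0).2 (by linarith)⟩
  refine ⟨p, hsub hp, Set.Subset.antisymm ?_ ?_⟩
  · exact (convex_differences_mem_Ioo n).isPreconnected.subset_connectedComponentIn hp hsub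
  · intro y hy i j hij
    -- The values of `x i - x j` on the component form an interval.
    have hI : ((fun x : Fin n → ℝ => x i - x j) ''
        connectedComponentIn (shiComp n) p).OrdConnected :=
      (isPreconnected_connectedComponentIn.image _ (by fun_prop)).ordConnected
    have hpI := Set.mem_image_of_mem (fun x : Fin n → ℝ => x i - x j)
      (mem_connectedComponentIn (hsub hp))
    have hyI := Set.mem_image_of_mem (fun x : Fin n → ℝ => x i - x j) hy
    obtain ⟨hp0, hp1⟩ := hp i j hij
    constructor
    · by_contra! hle
      obtain ⟨z, hz, hz0⟩ := hI.out hyI hpI ⟨hle, hp0.le⟩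
      exact (connectedComponentIn_subset _ _ hz i j hij).1 hz0
    · by_contra! hle
      obtain ⟨z, hz, hz1⟩ := hI.out hpI hyI ⟨hp1.le, hle⟩
      exact (connectedComponentIn_subset _ _ hz i j hij).2 hz1
end

section
/- For n ≥ 2, the number of parking functions a of length n satisfying a_1 = a_2 equals (n+1)^{n−2}. -/
/-!
The proof is Pollak's circle argument. Read preferences modulo `n + 1`, as functions
`f : Fin n → Fin (n + 1)`. Among the `n + 1` rotations `f - c` of `f`, exactly one is a parking
function (`existsUnique_rotation`). Rotation preserves the condition `f 0 = f 1`, so the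
`(n + 1) ^ (n - 1)` functions with `f 0 = f 1` split into `n + 1` classes, according to the
rotation `c`, each in bijection with the parking functions being counted.

For the uniqueness of the rotation, let `S t = #{i | f i < t} - t` (`excess`). Then `f - c` is a
parking function if and only if `c` is the first point of `{0, …, n}` at which `S` is minimal
(`isPF_rotation_iff`), and there is exactly one such point.
-/

/-- A parking function of length `n`: a function `a : Fin n → ℕ` such that for
every `k ≤ n`, at least `k` of the entries are `< k`.  (This forces all entries
to lie in `{0, …, n-1}`.) -/
def IsPF (n : ℕ) (a : Fin n → ℕ) : Prop :=
  ∀ k : ℕ, k ≤ n → k ≤ (Finset.univ.filter (fun i => a i < k)).card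

/-- The surplus of cars preferring a spot in `{0, …, t - 1}` over the number `t` of such spots. -/
def excess {n : ℕ} (f : Fin n → Fin (n + 1)) (t : ℕ) : ℤ :=
  ((Finset.univ.filter (fun i => (f i).val < t)).card : ℤ) - t

lemma val_sub_of_le {n : ℕ} {x c : Fin (n + 1)} (h : c.val ≤ x.val) :
    (x - c).val = x.val - c.val :=
  Fin.sub_val_of_le h

lemma val_sub_of_lt {n : ℕ} {x c : Fin (n + 1)} (h : x.val < c.val) :
    (x - c).val = x.val + (n + 1) - c.val := by
  rw [Fin.sub_def]
  show ((n + 1 - c.val) + x.val) % (n + 1) = _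
  rw [Nat.mod_eq_of_lt (by omega)]
  omega

/-- Counts the cars preferring one of the `k` spots starting at `c`, when these do not wrap around. -/
lemma card_rotation_of_le {n : ℕ} (f : Fin n → Fin (n + 1)) (c : Fin (n + 1)) (k : ℕ)
    (h : c.val + k ≤ n) :
    (Finset.univ.filter (fun i => (f i - c).val < k)).card
      + (Finset.univ.filter (fun i => (f i).val < c.val)).card
      = (Finset.univ.filter (fun i => (f i).val < c.val + k)).card := by
  simp only [Finset.card_filter]
  rw [← Finset.sum_add_distrib]
  refine Finset.sum_congr rfl fun i _ => ?_
  have hx := (f i).isLt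
  rcases le_or_gt c.val (f i).val with h' | h'
  · rw [val_sub_of_le h']; split_ifs <;> omega
  · rw [val_sub_of_lt h']; split_ifs <;> omega

/-- Counts the cars preferring one of the `k` spots starting at `c`, when these wrap around and end
with spot `t - 1`. -/
lemma card_rotation_of_wrap {n : ℕ} (f : Fin n → Fin (n + 1)) (c : Fin (n + 1)) (k t : ℕ)
    (hk : k ≤ n) (h : c.val + k = t + (n + 1)) :
    (Finset.univ.filter (fun i => (f i - c).val < k)).card
      + (Finset.univ.filter (fun i => (f i).val < c.val)).card
      = n + (Finset.univ.filter (fun i => (f i).val < t)).card := by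
  have hn : n = ∑ _i : Fin n, 1 := by simp
  conv_rhs => lhs; rw [hn]
  simp only [Finset.card_filter]
  rw [← Finset.sum_add_distrib, ← Finset.sum_add_distrib]
  refine Finset.sum_congr rfl fun i _ => ?_
  have hx := (f i).isLt
  rcases le_or_gt c.val (f i).val with h' | h'
  · rw [val_sub_of_le h']; split_ifs <;> omega
  · rw [val_sub_of_lt h']; split_ifs <;> omega

/-- The rotation by `c` is a parking function exactly when `c` is the first minimum of `excess f`
on `{0, …, n}`. -/
lemma isPF_rotation_iff {n : ℕ} (f : Fin n → Fin (n + 1)) (c : Fin (n + 1)) :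
    IsPF n (fun i => (f i - c).val) ↔
      (∀ t, c.val ≤ t → t ≤ n → excess f c.val ≤ excess f t) ∧
        (∀ t, t < c.val → excess f c.val < excess f t) := by
  have hc := c.isLt
  unfold IsPF excess
  beta_reduce
  constructor
  · intro h
    refine ⟨fun t h1 h2 => ?_, fun t h1 => ?_⟩
    · obtain ⟨k, rfl⟩ := Nat.exists_eq_add_of_le h1
      have := h k (by omega)
      have := card_rotation_of_le f c k h2
      push_cast
      omega
    · have := h (t + (n + 1) - c.val) (by omega)
      have := card_rotation_of_wrap f c (t + (n + 1) - c.val) t (by omega) (by omega)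
      omega
  · rintro ⟨h1, h2⟩ k hk
    rcases le_or_gt (c.val + k) n with h | h
    · have := h1 (c.val + k) (by omega) h
      have := card_rotation_of_le f c k h
      push_cast at *
      omega
    · have := h2 (c.val + k - (n + 1)) (by omega)
      have := card_rotation_of_wrap f c k (c.val + k - (n + 1)) hk (by omega)
      omega

lemma existsUnique_rotation {n : ℕ} (f : Fin n → Fin (n + 1)) :
    ∃! c : Fin (n + 1), IsPF n (fun i => (f i - c).val) := by
  simp only [isPF_rotation_iff]
  have hex : ∃ c, c ≤ n ∧ ∀ t, t ≤ n → excess f c ≤ excess f t := by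
    obtain ⟨c, hc, hmin⟩ := Finset.exists_min_image (Finset.range (n + 1)) (excess f) ⟨0, by simp⟩
    refine ⟨c, by simpa [Nat.lt_succ_iff] using hc, fun t ht => hmin t (by simp; omega)⟩
  classical
  obtain ⟨hc, hmin⟩ := Nat.find_spec hex
  refine ⟨⟨Nat.find hex, by omega⟩, ⟨fun t _ ht => hmin t ht, fun t ht => ?_⟩, ?_⟩
  · by_contra hlt
    have ht' : t < Nat.find hex := ht
    exact Nat.find_min hex ht' ⟨by omega, fun s hs => (not_lt.mp hlt).trans (hmin s hs)⟩
  · rintro d ⟨h1, h2⟩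
    have hd := d.isLt
    apply Fin.ext
    show d.val = Nat.find hex
    rcases lt_trichotomy d.val (Nat.find hex) with h | h | h
    · refine absurd ⟨by omega, fun s hs => ?_⟩ (Nat.find_min hex h)
      exact (h1 _ h.le hc).trans (hmin s hs)
    · exact h
    · exact absurd (hmin d.val (by omega)) (not_le.mpr (h2 _ h))

lemma IsPF.lt {n : ℕ} {a : Fin n → ℕ} (h : IsPF n a) (i : Fin n) : a i < n := by
  have h1 := h n le_rfl
  have h2 : (Finset.univ.filter (fun i => a i < n)) = Finset.univ :=
    Finset.eq_univ_of_card _ (le_antisymm (Finset.card_le_univ _) (by simpa using h1))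
  have h3 := Finset.mem_univ i
  rw [← h2] at h3
  simpa using h3

/-- A function with `f 0 = f 1` is determined by its restriction to the indices other than `0`,
which is arbitrary. -/
lemma card_eq_first_two (m q : ℕ) :
    (Finset.univ.filter (fun f : Fin (m + 2) → Fin q => f 0 = f 1)).card = q ^ (m + 1) := by
  have h : (Finset.univ.filter (fun f : Fin (m + 2) → Fin q => f 0 = f 1)).card
      = (Finset.univ : Finset (Fin (m + 1) → Fin q)).card := by
    refine Finset.card_bij' (fun f _ => Fin.tail f)
      (fun g _ => (Fin.cons (g 0) g : Fin (m + 2) → Fin q)) ?_ ?_ ?_ ?_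
    · simp
    · intro g _
      simp
    · intro f hf
      have hf' : f 0 = f 1 := by simpa using hf
      have : Fin.tail f 0 = f 0 := hf'.symm
      simp only [this]
      exact Fin.cons_self_tail f
    · intro g _
      exact Fin.tail_cons _ _
  rw [h]
  simp

/-- The number of parking functions of length `n` with `a_1 = a_2` is `(n+1)^(n-2)`. -/
theorem eq_parking_count (n : ℕ) (hn : 2 ≤ n) :
    Set.ncard {a : Fin n → ℕ | IsPF n a ∧ a ⟨0, by omega⟩ = a ⟨1, by omega⟩} =
      (n + 1) ^ (n - 2) := by
  classical
  obtain ⟨m, rfl⟩ : ∃ m, n = m + 2 := ⟨n - 2, by omega⟩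
  -- The parking functions in question, with values read in `Fin (n + 1)`.
  set P : Finset (Fin (m + 2) → Fin (m + 2 + 1)) :=
    Finset.univ.filter (fun f => IsPF (m + 2) (fun i => (f i).val) ∧ f 0 = f 1) with hP
  have hcard : Set.ncard {a : Fin (m + 2) → ℕ | IsPF (m + 2) a ∧
      a ⟨0, by omega⟩ = a ⟨1, by omega⟩} = P.card := by
    have himg : {a : Fin (m + 2) → ℕ | IsPF (m + 2) a ∧ a ⟨0, by omega⟩ = a ⟨1, by omega⟩}
        = (fun (f : Fin (m + 2) → Fin (m + 2 + 1)) i => (f i).val) '' (P : Set _) := by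
      ext a
      simp only [Set.mem_ofPred_eq, Set.mem_image, Finset.mem_coe, hP, Finset.mem_filter,
        Finset.mem_univ, true_and]
      constructor
      · rintro ⟨h1, h2⟩
        exact ⟨fun i => ⟨a i, (h1.lt i).trans (Nat.lt_succ_self _)⟩, ⟨h1, Fin.ext h2⟩, rfl⟩
      · rintro ⟨f, ⟨h1, h2⟩, rfl⟩
        exact ⟨h1, congrArg Fin.val h2⟩
    rw [himg, Set.ncard_image_of_injective _ ?_, Set.ncard_coe_finset]
    intro f g h
    funext i
    exact Fin.ext (congrFun h i)
  rw [hcard]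
  -- Double counting of the pairs `(f, c)` with `f 0 = f 1` and `f - c` a parking function.
  have hcount := Finset.sum_card_bipartiteAbove_eq_sum_card_bipartiteBelow
    (s := Finset.univ.filter (fun f : Fin (m + 2) → Fin (m + 2 + 1) => f 0 = f 1))
    (t := (Finset.univ : Finset (Fin (m + 2 + 1))))
    (fun f c => IsPF (m + 2) (fun i => (f i - c).val))
  have hone : ∀ f : Fin (m + 2) → Fin (m + 2 + 1),
      (Finset.bipartiteAbove (fun (f : Fin (m + 2) → Fin (m + 2 + 1)) c =>
        IsPF (m + 2) (fun i => (f i - c).val)) Finset.univ f).card = 1 := by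
    intro f
    obtain ⟨c, hc, huniq⟩ := existsUnique_rotation f
    refine Finset.card_eq_one.mpr ⟨c, ?_⟩
    ext d
    simp only [Finset.mem_bipartiteAbove, Finset.mem_univ, true_and, Finset.mem_singleton]
    exact ⟨huniq d, fun h => h ▸ hc⟩
  have hfib : ∀ c : Fin (m + 2 + 1),
      (Finset.bipartiteBelow (fun (f : Fin (m + 2) → Fin (m + 2 + 1)) c =>
        IsPF (m + 2) (fun i => (f i - c).val))
        (Finset.univ.filter (fun f => f 0 = f 1)) c).card = P.card := by
    intro c
    refine Finset.card_bij' (fun f _ i => f i - c) (fun g _ i => g i + c) ?_ ?_ ?_ ?_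
    · intro f hf
      simp only [Finset.mem_bipartiteBelow, Finset.mem_filter, Finset.mem_univ, true_and] at hf
      simp only [hP, Finset.mem_filter, Finset.mem_univ, true_and]
      exact ⟨hf.2, by rw [hf.1]⟩
    · intro g hg
      simp only [hP, Finset.mem_filter, Finset.mem_univ, true_and] at hg
      simp only [Finset.mem_bipartiteBelow, Finset.mem_filter, Finset.mem_univ, true_and,
        add_sub_cancel_right]
      exact ⟨by rw [hg.2], hg.1⟩
    · intro f _
      simp
    · intro g _
      simp
  simp only [hone, hfib, Finset.sum_const, smul_eq_mul, mul_one, card_eq_first_two,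
    Finset.card_univ, Fintype.card_fin] at hcount
  have hpos : 0 < m + 2 + 1 := by omega
  apply Nat.eq_of_mul_eq_mul_left hpos
  rw [← hcount, Nat.add_sub_cancel, pow_succ, mul_comm]
end

section
/- For n ≥ 2, the number of regions R of the Shi arrangement S_n such that x_1 − x_2 < 0 for all x ∈ R is greater than or equal to the number of regions R such that x_1 − x_2 > 1 for all x ∈ R. -/
/-- The sides of the Shi hyperplanes on which `x` lies: the entry `(i, j)` records, when `i < j`,
whether `x i - x j > 0` and whether `x i - x j > 1`; for other pairs it is constantly false. -/
def shiSides {n : ℕ} (x : Fin n → ℝ) : Fin n → Fin n → Prop × Prop :=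
  fun i j => (i < j ∧ 0 < x i - x j, i < j ∧ 1 < x i - x j)

lemma shiSides_eq_iff {n : ℕ} {x y : Fin n → ℝ} :
    shiSides x = shiSides y ↔ ∀ i j : Fin n, i < j →
      (0 < x i - x j ↔ 0 < y i - y j) ∧ (1 < x i - x j ↔ 1 < y i - y j) := by
  simp only [funext_iff, shiSides, Prod.mk.injEq, eq_iff_iff]
  refine forall_congr' fun i => forall_congr' fun j => ?_
  tauto

/-- On a preconnected set, `z i - z j` cannot pass from one side of an avoided value to the
other. -/
lemma lt_of_preconnected {n : ℕ} {S : Set (Fin n → ℝ)} (hS : IsPreconnected S) (i j : Fin n)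
    (c : ℝ) (hc : ∀ z ∈ S, z i - z j ≠ c) {x y : Fin n → ℝ} (hx : x ∈ S) (hy : y ∈ S)
    (h : c < x i - x j) : c < y i - y j := by
  by_contra! h'
  have hcont : ContinuousOn (fun z : Fin n → ℝ => z i - z j) S := by fun_prop
  obtain ⟨z, hz, hzc⟩ := hS.intermediate_value hy hx hcont ⟨h', h.le⟩
  exact hc z hz hzc

lemma shiSides_eq_of_mem {n : ℕ} {x y : Fin n → ℝ} (hx : x ∈ shiComp n)
    (hy : y ∈ connectedComponentIn (shiComp n) x) : shiSides x = shiSides y := by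
  have hS := isPreconnected_connectedComponentIn (F := shiComp n) (x := x)
  have hsub := connectedComponentIn_subset (shiComp n) x
  have hxm := mem_connectedComponentIn hx
  refine shiSides_eq_iff.2 fun i j hij => ?_
  have hne0 := fun z hz => (hsub (a := z) hz i j hij).1
  have hne1 := fun z hz => (hsub (a := z) hz i j hij).2
  exact ⟨⟨lt_of_preconnected hS i j 0 hne0 hxm hy, lt_of_preconnected hS i j 0 hne0 hy hxm⟩,
    ⟨lt_of_preconnected hS i j 1 hne1 hxm hy, lt_of_preconnected hS i j 1 hne1 hy hxm⟩⟩

/-- A convex combination of two reals on the same side of `c` is not equal to `c`. -/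
lemma combo_ne {a b s t c : ℝ} (ha : 0 ≤ a) (hb : 0 ≤ b) (hab : a + b = 1)
    (hs : s ≠ c) (ht : t ≠ c) (h : c < s ↔ c < t) : a * s + b * t ≠ c := by
  obtain rfl : a = 1 - b := by linarith
  rcases lt_or_gt_of_ne hs with h1 | h1
  · have h2 : t < c := lt_of_le_of_ne (not_lt.1 fun h3 => absurd (h.2 h3) h1.not_gt) ht
    rcases hb.eq_or_lt with rfl | hb'
    · simpa using hs
    · nlinarith [mul_pos hb' (sub_pos.2 h2), mul_nonneg ha (sub_pos.2 h1).le]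
  · have h2 := h.1 h1
    rcases hb.eq_or_lt with rfl | hb'
    · simpa using hs
    · nlinarith [mul_pos hb' (sub_pos.2 h2), mul_nonneg ha (sub_pos.2 h1).le]

/-- The regions are exactly the classes of points lying on the same sides of all hyperplanes:
the segment between two such points avoids the arrangement. -/
lemma component_eq_iff {n : ℕ} {x y : Fin n → ℝ} (hx : x ∈ shiComp n) (hy : y ∈ shiComp n) :
    connectedComponentIn (shiComp n) x = connectedComponentIn (shiComp n) y ↔
      shiSides x = shiSides y := by
  constructor
  · intro h
    exact shiSides_eq_of_mem hx (h ▸ mem_connectedComponentIn hy)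
  · intro h
    rw [shiSides_eq_iff] at h
    have hseg : segment ℝ x y ⊆ shiComp n := by
      rintro _ ⟨a, b, ha, hb, hab, rfl⟩ i j hij
      have e : (a • x + b • y) i - (a • x + b • y) j = a * (x i - x j) + b * (y i - y j) := by
        simp only [Pi.add_apply, Pi.smul_apply, smul_eq_mul]
        ring
      rw [e]
      exact ⟨combo_ne ha hb hab (hx i j hij).1 (hy i j hij).1 (h i j hij).1,
        combo_ne ha hb hab (hx i j hij).2 (hy i j hij).2 (h i j hij).2⟩
    exact connectedComponentIn_eq ((convex_segment x y).isPreconnected.subset_connectedComponentIn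
      (left_mem_segment ℝ x y) hseg (right_mem_segment ℝ x y))

/-- Exchanging the two smallest indices preserves the order of every pair of indices other than
the pair of these two. -/
lemma swap_lt_swap {n : ℕ} {a b : Fin n} (ha : a.val = 0) (hb : b.val = 1) {i j : Fin n}
    (hij : i < j) (h : ¬ (i = a ∧ j = b)) : Equiv.swap a b i < Equiv.swap a b j := by
  simp only [Equiv.swap_apply_def, Fin.ext_iff, Fin.lt_def] at *
  split_ifs <;> omega

lemma swap_mem_shiComp {n : ℕ} {a b : Fin n} (ha : a.val = 0) (hb : b.val = 1)
    {x : Fin n → ℝ} (hx : x ∈ shiComp n) (h : 1 < x a - x b) :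
    x ∘ Equiv.swap a b ∈ shiComp n := by
  intro i j hij
  by_cases hp : i = a ∧ j = b
  · obtain ⟨rfl, rfl⟩ := hp
    simp only [Function.comp_apply, Equiv.swap_apply_left, Equiv.swap_apply_right]
    constructor <;> intro h' <;> linarith
  · exact hx _ _ (swap_lt_swap ha hb hij hp)

lemma shiSides_eq_of_swap {n : ℕ} {a b : Fin n} (ha : a.val = 0) (hb : b.val = 1)
    {x y : Fin n → ℝ} (hx : 1 < x a - x b) (hy : 1 < y a - y b)
    (h : shiSides (x ∘ Equiv.swap a b) = shiSides (y ∘ Equiv.swap a b)) :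
    shiSides x = shiSides y := by
  rw [shiSides_eq_iff] at *
  intro i j hij
  by_cases hp : i = a ∧ j = b
  · obtain ⟨rfl, rfl⟩ := hp
    exact ⟨iff_of_true (by linarith) (by linarith), iff_of_true hx hy⟩
  · simpa using h _ _ (swap_lt_swap ha hb hij hp)

lemma finite_shiRegions (n : ℕ) : {R | IsShiRegion n R}.Finite := by
  choose! p hp using fun R (h : IsShiRegion n R) => h
  refine Set.Finite.of_injOn (f := fun R => shiSides (p R)) (t := Set.univ)
    (fun _ _ => Set.mem_univ _) ?_ Set.finite_univ
  intro R hR R' hR' h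
  rw [(hp R hR).2, (hp R' hR').2]
  exact (component_eq_iff (hp R hR).1 (hp R' hR').1).2 h

/-- The number of Shi regions with `x_1 - x_2 < 0` is at least the number with
`x_1 - x_2 > 1`. -/
theorem shi_regions_lt_ge_gt (n : ℕ) (hn : 2 ≤ n) :
    Set.ncard {R : Set (Fin n → ℝ) | IsShiRegion n R ∧
        ∀ x ∈ R, 1 < x ⟨0, by omega⟩ - x ⟨1, by omega⟩} ≤
      Set.ncard {R : Set (Fin n → ℝ) | IsShiRegion n R ∧
        ∀ x ∈ R, x ⟨0, by omega⟩ - x ⟨1, by omega⟩ < 0} := by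
  generalize ha' : (⟨0, by omega⟩ : Fin n) = a
  generalize hb' : (⟨1, by omega⟩ : Fin n) = b
  have ha : a.val = 0 := by rw [← ha']
  have hb : b.val = 1 := by rw [← hb']
  have hab : a < b := by rw [Fin.lt_def]; omega
  choose! p hp using fun R (h : IsShiRegion n R) => h
  have hgt : ∀ R, IsShiRegion n R → (∀ x ∈ R, 1 < x a - x b) → 1 < p R a - p R b :=
    fun R hR h => h _ (by
      have := mem_connectedComponentIn (hp R hR).1
      rwa [← (hp R hR).2] at this)
  refine Set.ncard_le_ncard_of_injOn
    (fun R => connectedComponentIn (shiComp n) (p R ∘ Equiv.swap a b)) ?_ ?_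
    ((finite_shiRegions n).subset fun R hR => hR.1)
  · rintro R ⟨hR, h⟩
    have h1 := hgt R hR h
    have hm := swap_mem_shiComp ha hb (hp R hR).1 h1
    refine ⟨⟨_, hm, rfl⟩, fun y hy => ?_⟩
    have hs := (shiSides_eq_iff.1 (shiSides_eq_of_mem hm hy) a b hab).1
    have hne := (connectedComponentIn_subset _ _ hy a b hab).1
    simp only [Function.comp_apply, Equiv.swap_apply_left, Equiv.swap_apply_right] at hs
    exact lt_of_le_of_ne (not_lt.1 fun h0 => by linarith [hs.2 h0]) hne
  · rintro R ⟨hR, h⟩ R' ⟨hR', h'⟩ heq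
    have h1 := hgt R hR h
    have h1' := hgt R' hR' h'
    have hs := (component_eq_iff (swap_mem_shiComp ha hb (hp R hR).1 h1)
      (swap_mem_shiComp ha hb (hp R' hR').1 h1')).1 heq
    rw [(hp R hR).2, (hp R' hR').2]
    exact (component_eq_iff (hp R hR).1 (hp R' hR').1).2 (shiSides_eq_of_swap ha hb h1 h1' hs)
end

section
/- For n ≥ 2, the number of regions R of the Shi arrangement S_n such that x_1 − x_2 < 0 for all x ∈ R is greater than or equal to the number of regions R such that 0 < x_1 − x_2 < 1 for all x ∈ R. -/
/-- `x` and `y` lie on the same side of every hyperplane of the Shi arrangement. For points on a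
hyperplane this counts the closed half-space `x i - x j ≥ c` as one side. -/
def ShiSameSide {n : ℕ} (x y : Fin n → ℝ) : Prop :=
  ∀ i j : Fin n, i < j → ((x i - x j < 0 ↔ y i - y j < 0) ∧ (x i - x j < 1 ↔ y i - y j < 1))

lemma lt_iff_of_preconnected {n : ℕ} {C : Set (Fin n → ℝ)} (hC : IsPreconnected C)
    {x y : Fin n → ℝ} (hx : x ∈ C) (hy : y ∈ C) (i j : Fin n) (c : ℝ)
    (h : ∀ z ∈ C, z i - z j ≠ c) : x i - x j < c ↔ y i - y j < c := by
  have key : ∀ a ∈ C, ∀ b ∈ C, a i - a j < c → b i - b j < c := by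
    intro a ha b hb hac
    by_contra hbc
    have hcont : ContinuousOn (fun z : Fin n → ℝ => z i - z j) C := by fun_prop
    obtain ⟨z, hz, hzc⟩ := hC.intermediate_value ha hb hcont ⟨hac.le, not_lt.mp hbc⟩
    exact h z hz hzc
  exact ⟨key x hx y hy, key y hy x hx⟩

lemma shiSameSide_of_component_eq {n : ℕ} {x y : Fin n → ℝ} (hx : x ∈ shiComp n)
    (hy : y ∈ shiComp n)
    (h : connectedComponentIn (shiComp n) x = connectedComponentIn (shiComp n) y) :
    ShiSameSide x y := by
  have hpre : IsPreconnected (connectedComponentIn (shiComp n) x) :=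
    isPreconnected_connectedComponentIn
  have hxC := mem_connectedComponentIn hx
  have hyC : y ∈ connectedComponentIn (shiComp n) x := h ▸ mem_connectedComponentIn hy
  intro i j hij
  exact ⟨lt_iff_of_preconnected hpre hxC hyC i j 0
      fun z hz => (connectedComponentIn_subset _ _ hz i j hij).1,
    lt_iff_of_preconnected hpre hxC hyC i j 1
      fun z hz => (connectedComponentIn_subset _ _ hz i j hij).2⟩

lemma ne_of_same_side {a b s t c : ℝ} (hs : 0 ≤ s) (ht : 0 ≤ t) (hst : s + t = 1)
    (ha : a ≠ c) (hb : b ≠ c) (h : a < c ↔ b < c) : s * a + t * b ≠ c := by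
  rcases lt_or_gt_of_ne ha with hac | hac
  · exact ((convex_Iio c) hac (h.mp hac) hs ht hst).ne
  · have hbc : c < b := lt_of_le_of_ne (not_lt.mp fun hb' => hac.not_gt (h.mpr hb')) hb.symm
    exact (((convex_Ioi c) hac hbc hs ht hst : c < _)).ne'

/-- Points on the same side of all hyperplanes are joined by a segment in the complement. -/
lemma ShiSameSide.component_eq {n : ℕ} {x y : Fin n → ℝ} (h : ShiSameSide x y)
    (hx : x ∈ shiComp n) (hy : y ∈ shiComp n) :
    connectedComponentIn (shiComp n) x = connectedComponentIn (shiComp n) y := by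
  have hseg : segment ℝ x y ⊆ shiComp n := by
    rintro _ ⟨s, t, hs, ht, hst, rfl⟩ i j hij
    have e : (s • x + t • y) i - (s • x + t • y) j = s * (x i - x j) + t * (y i - y j) := by
      simp only [Pi.add_apply, Pi.smul_apply, smul_eq_mul]; ring
    rw [e]
    exact ⟨ne_of_same_side hs ht hst (hx i j hij).1 (hy i j hij).1 (h i j hij).1,
      ne_of_same_side hs ht hst (hx i j hij).2 (hy i j hij).2 (h i j hij).2⟩
  exact connectedComponentIn_eq <|
    (convex_segment x y).isPreconnected.subset_connectedComponentIn
      (left_mem_segment ℝ x y) hseg (right_mem_segment ℝ x y)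

/-- The coordinate swap sends an ordered pair of indices other than `(0, 1)` to an ordered pair. -/
lemma swap_lt_swap_s7 {n : ℕ} {p q : Fin n} (hp : p.val = 0) (hq : q.val = 1) {i j : Fin n}
    (hij : i < j) (hne : ¬(i = p ∧ j = q)) : Equiv.swap p q i < Equiv.swap p q j := by
  simp only [Equiv.swap_apply_def]
  simp only [Fin.ext_iff, Fin.lt_def] at *
  split_ifs <;> omega

lemma swap_mem_shiComp_s7 {n : ℕ} {p q : Fin n} (hp : p.val = 0) (hq : q.val = 1)
    {x : Fin n → ℝ} (hx : x ∈ shiComp n) (h0 : 0 < x p - x q) :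
    x ∘ Equiv.swap p q ∈ shiComp n := by
  intro i j hij
  by_cases hne : i = p ∧ j = q
  · obtain ⟨rfl, rfl⟩ := hne
    simp only [Function.comp_apply, Equiv.swap_apply_left, Equiv.swap_apply_right]
    constructor <;> intro h <;> linarith
  · exact hx _ _ (swap_lt_swap_s7 hp hq hij hne)

lemma shiSameSide_of_swap {n : ℕ} {p q : Fin n} (hp : p.val = 0) (hq : q.val = 1)
    {x y : Fin n → ℝ} (hx : 0 < x p - x q ∧ x p - x q < 1) (hy : 0 < y p - y q ∧ y p - y q < 1)
    (h : ShiSameSide (x ∘ Equiv.swap p q) (y ∘ Equiv.swap p q)) : ShiSameSide x y := by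
  intro i j hij
  by_cases hne : i = p ∧ j = q
  · obtain ⟨rfl, rfl⟩ := hne
    exact ⟨iff_of_false hx.1.not_gt hy.1.not_gt, iff_of_true hx.2 hy.2⟩
  · simpa using h _ _ (swap_lt_swap_s7 hp hq hij hne)

/-- The number of Shi regions with `x_1 - x_2 < 0` is at least the number with
`0 < x_1 - x_2 < 1`. -/
theorem shi_regions_lt_ge_mid (n : ℕ) (hn : 2 ≤ n) :
    Set.ncard {R : Set (Fin n → ℝ) | IsShiRegion n R ∧
        ∀ x ∈ R, 0 < x ⟨0, by omega⟩ - x ⟨1, by omega⟩ ∧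
          x ⟨0, by omega⟩ - x ⟨1, by omega⟩ < 1} ≤
      Set.ncard {R : Set (Fin n → ℝ) | IsShiRegion n R ∧
        ∀ x ∈ R, x ⟨0, by omega⟩ - x ⟨1, by omega⟩ < 0} := by
  obtain ⟨p, hp⟩ : ∃ p : Fin n, p = ⟨0, by omega⟩ := ⟨_, rfl⟩
  obtain ⟨q, hq⟩ : ∃ q : Fin n, q = ⟨1, by omega⟩ := ⟨_, rfl⟩
  simp only [← hp, ← hq]
  have hp0 : p.val = 0 := by rw [hp]
  have hq1 : q.val = 1 := by rw [hq]
  have hpq : p < q := by rw [Fin.lt_def]; omega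
  -- A base point in each region, used to define the map on regions.
  have hbase : ∀ R : Set (Fin n → ℝ), ∃ x, IsShiRegion n R →
      x ∈ shiComp n ∧ R = connectedComponentIn (shiComp n) x := by
    intro R
    by_cases hR : IsShiRegion n R
    · obtain ⟨x, hx⟩ := hR
      exact ⟨x, fun _ => hx⟩
    · exact ⟨0, fun h => absurd h hR⟩
  choose b hb using hbase
  have hbmem : ∀ R, IsShiRegion n R → b R ∈ R := by
    intro R hR
    have h := mem_connectedComponentIn (hb R hR).1
    rwa [← (hb R hR).2] at h
  refine Set.ncard_le_ncard_of_injOn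
    (fun R => connectedComponentIn (shiComp n) (b R ∘ Equiv.swap p q)) ?_ ?_
    ((finite_shiRegions n).subset fun R hR => hR.1)
  · rintro R ⟨hR, hstrip⟩
    have hs := hstrip _ (hbmem R hR)
    have hmem := swap_mem_shiComp_s7 hp0 hq1 (hb R hR).1 hs.1
    refine ⟨⟨_, hmem, rfl⟩, fun z hz => ?_⟩
    have hside := shiSameSide_of_component_eq hmem (connectedComponentIn_subset _ _ hz)
      (connectedComponentIn_eq hz)
    refine (hside p q hpq).1.mp ?_
    simp only [Function.comp_apply, Equiv.swap_apply_left, Equiv.swap_apply_right]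
    linarith
  · rintro R ⟨hR, hRs⟩ S ⟨hS, hSs⟩ hRS
    have hr := hRs _ (hbmem R hR)
    have hs := hSs _ (hbmem S hS)
    have hside := shiSameSide_of_swap hp0 hq1 hr hs <|
      shiSameSide_of_component_eq (swap_mem_shiComp_s7 hp0 hq1 (hb R hR).1 hr.1)
        (swap_mem_shiComp_s7 hp0 hq1 (hb S hS).1 hs.1) hRS
    rw [(hb R hR).2, (hb S hS).2]
    exact hside.component_eq (hb R hR).1 (hb S hS).1
end

section
/- For n ≥ 2 and fixed distinct vertices v1, v2 ∈ {1,…,n}, the number of trees on the vertex set {0,1,…,n} in which neither v1 lies on the unique path from v2 to 0 nor v2 lies on the unique path from v1 to 0 is greater than or equal to the number of trees in which v1 lies on the unique path from v2 to 0. -/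
/-!
For three distinct vertices `0, v1, v2` of a tree, the event that `v1` lies on the `v2`–`0` path
and the event that `0` lies on the `v2`–`v1` path are exchanged by the relabelling that
transposes `0` and `v1`, so they hold for equally many trees.  The second event implies that
neither `v1` lies on the `v2`–`0` path nor `v2` lies on the `v1`–`0` path: both of these paths
are obtained by cutting the `v2`–`v1` path at `0`.  Hence relabelling injects the trees counted
on the left into the trees counted on the right.
-/

/-- `v` lies on the unique `u`–`w` path in `G`: there is a path from `u` to `w`
whose support contains `v`.  (In a tree the `u`–`w` path is unique.) -/
def LiesOnPath {V : Type*} (G : SimpleGraph V) (v u w : V) : Prop :=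
  ∃ p : G.Walk u w, p.IsPath ∧ v ∈ p.support

theorem LiesOnPath.map_iso {V W : Type*} {G : SimpleGraph V} {H : SimpleGraph W} (e : G ≃g H)
    {v u w : V} (h : LiesOnPath G v u w) : LiesOnPath H (e v) (e u) (e w) := by
  obtain ⟨p, hp, hv⟩ := h
  refine ⟨p.map e.toHom, hp.map e.injective, ?_⟩
  rw [SimpleGraph.Walk.support_map]
  exact List.mem_map_of_mem hv

theorem LiesOnPath.symm {V : Type*} {G : SimpleGraph V} {v u w : V} (h : LiesOnPath G v u w) :
    LiesOnPath G v w u := by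
  obtain ⟨p, hp, hv⟩ := h
  exact ⟨p.reverse, hp.reverse, by simpa using hv⟩

/-- If `x` is strictly before `w` on the `u`–`w` path of a forest, then `w` is not on the
`u`–`x` path, which is an initial segment of the former. -/
theorem LiesOnPath.not_liesOnPath {V : Type*} {G : SimpleGraph V} (hG : G.IsAcyclic) {x u w : V}
    (hxw : x ≠ w) (h : LiesOnPath G x u w) : ¬LiesOnPath G w u x := by
  classical
  obtain ⟨p, hp, hx⟩ := h
  rintro ⟨q, hq, hw⟩
  have hqp : q = p.takeUntil x hx :=
    congrArg Subtype.val ((hG.subsingleton_path u x).elim ⟨q, hq⟩ ⟨p.takeUntil x hx, hp.takeUntil hx⟩)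
  rw [hqp] at hw
  exact SimpleGraph.Walk.endpoint_notMem_support_takeUntil hp hx hxw.symm hw

/-- The number of trees on `{0, 1, …, n}` in which neither `v1` lies on the
`v2`–`0` path nor `v2` lies on the `v1`–`0` path is at least the number of
trees in which `v1` lies on the `v2`–`0` path. -/
theorem tree_count_disj_ge_v1 (n : ℕ) (hn : 2 ≤ n) (v1 v2 : Fin (n + 1))
    (h12 : v1 ≠ v2) (h1 : v1 ≠ 0) (h2 : v2 ≠ 0) :
    Set.ncard {T : SimpleGraph (Fin (n + 1)) | T.IsTree ∧ LiesOnPath T v1 v2 0} ≤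
      Set.ncard {T : SimpleGraph (Fin (n + 1)) | T.IsTree ∧
        ¬LiesOnPath T v1 v2 0 ∧ ¬LiesOnPath T v2 v1 0} := by
  let e : Equiv.Perm (Fin (n + 1)) := Equiv.swap 0 v1
  have he0 : e 0 = v1 := Equiv.swap_apply_left 0 v1
  have he1 : e v1 = 0 := Equiv.swap_apply_right 0 v1
  have he2 : e v2 = v2 := Equiv.swap_apply_of_ne_of_ne h2 h12.symm
  refine Set.ncard_le_ncard_of_injOn (fun T => T.map e.toEmbedding) ?_
    ((SimpleGraph.map_injective e.toEmbedding).injOn) (Set.toFinite _)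
  rintro T ⟨hT, hpath⟩
  have hT' : (T.map e.toEmbedding).IsTree := (SimpleGraph.Iso.map e T).isTree_iff.mp hT
  have h0 : LiesOnPath (T.map e.toEmbedding) 0 v2 v1 := by
    have h := hpath.map_iso (SimpleGraph.Iso.map e T)
    change LiesOnPath _ (e v1) (e v2) (e 0) at h
    rwa [he0, he1, he2] at h
  exact ⟨hT', h0.not_liesOnPath hT'.isAcyclic h1.symm,
    h0.symm.not_liesOnPath hT'.isAcyclic h2.symm⟩
end

section
/- For n ≥ 2, the number of parking functions a of length n with a_1 > a_2 equals the number of regions R of the Shi arrangement S_n such that x_1 − x_2 < 0 for all x ∈ R. -/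
namespace Shi

open Finset

variable {n : ℕ}

/-- `k` and `l` are consecutive elements of one fibre of `f`. -/
def Prev (f : Fin n → ℕ) (k l : Fin n) : Prop :=
  k < l ∧ f k = f l ∧ ∀ m, k < m → m < l → f m ≠ f l

/-- The position, counted from `0`, of the label `i` when the coordinates of `x` are listed in
decreasing order. -/
noncomputable def pos (x : Fin n → ℝ) (i : Fin n) : ℕ := #{k | x i < x k}

/-- `f` is the Athanasiadis–Linusson label of the point `x`: the pairs `Prev f` are the maximal arcs
of `x`, and the least element of each fibre sits at the position given by the value of `f`. -/
structure Labels (x : Fin n → ℝ) (f : Fin n → ℕ) : Prop where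
  root : ∀ i, (∀ k, ¬ Prev f k i) → f i = pos x i
  arc : ∀ k l, Prev f k l → x l < x k ∧ x k - x l < 1
  nonnest : ∀ k l k' l', Prev f k l → Prev f k' l' → x k' < x k → x l' < x l
  cover : ∀ i j, i < j → x j < x i → x i - x j < 1 →
    ∃ k l, Prev f k l ∧ x i ≤ x k ∧ x l ≤ x j

/-- `x` and `y` lie on the same side of every hyperplane, for points off the hyperplanes. -/
def SameSide (x y : Fin n → ℝ) : Prop :=
  ∀ i j, i < j → (x j < x i ↔ y j < y i) ∧ (x i - x j < 1 ↔ y i - y j < 1)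

lemma inj_of_mem {x : Fin n → ℝ} (hx : x ∈ shiComp n) : Function.Injective x := by
  intro i j h
  rcases lt_trichotomy i j with hij | hij | hij
  · exact absurd (by linarith) (hx i j hij).1
  · exact hij
  · exact absurd (by linarith) (hx j i hij).1

/-! ### Regions as classes of points -/

lemma SameSide.symm {x y : Fin n → ℝ} (h : SameSide x y) : SameSide y x :=
  fun i j hij => ⟨(h i j hij).1.symm, (h i j hij).2.symm⟩

lemma SameSide.lt_iff {x y : Fin n → ℝ} (hx : x ∈ shiComp n) (hy : y ∈ shiComp n)
    (h : SameSide x y) (i j : Fin n) : x i < x j ↔ y i < y j := by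
  rcases lt_trichotomy i j with hij | hij | hij
  · have h1 := (h i j hij).1
    have h2 := (inj_of_mem hx).ne hij.ne
    have h3 := (inj_of_mem hy).ne hij.ne
    grind
  · subst hij; simp
  · exact (h j i hij).1

lemma SameSide.sub_lt_iff {x y : Fin n → ℝ} (h : SameSide x y) {i j : Fin n} (hij : i < j) :
    x i - x j < 1 ↔ y i - y j < 1 := (h i j hij).2

/-- A point on the segment between two points on the same side of all hyperplanes avoids the
hyperplanes. -/
lemma segment_subset {x y : Fin n → ℝ} (hx : x ∈ shiComp n) (hy : y ∈ shiComp n)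
    (h : SameSide x y) : segment ℝ x y ⊆ shiComp n := by
  rintro z ⟨a, b, ha, hb, hab, rfl⟩ i j hij
  obtain ⟨hx0, hx1⟩ := hx i j hij
  obtain ⟨hy0, hy1⟩ := hy i j hij
  obtain ⟨h0, h1⟩ := h i j hij
  have key : ∀ u v : ℝ, (u < 0 ∧ v < 0) ∨ (0 < u ∧ 0 < v) → a * u + b * v ≠ 0 := by
    rintro u v (⟨hu, hv⟩ | ⟨hu, hv⟩)
    · rcases ha.eq_or_lt with rfl | ha
      · have : b = 1 := by linarith
        subst this; linarith
      · nlinarith [mul_pos ha (neg_pos.2 hu), mul_nonneg hb (neg_pos.2 hv).le]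
    · rcases ha.eq_or_lt with rfl | ha
      · have : b = 1 := by linarith
        subst this; linarith
      · nlinarith [mul_pos ha hu, mul_nonneg hb hv.le]
  simp only [Pi.add_apply, Pi.smul_apply, smul_eq_mul]
  constructor
  · intro hz
    refine key (x i - x j) (y i - y j) ?_ (by linarith)
    rcases lt_or_gt_of_ne hx0 with hh | hh <;> rcases lt_or_gt_of_ne hy0 with hh' | hh'
    · exact Or.inl ⟨hh, hh'⟩
    · linarith [h0.2 (by linarith)]
    · linarith [h0.1 (by linarith)]
    · exact Or.inr ⟨hh, hh'⟩
  · intro hz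
    refine key (x i - x j - 1) (y i - y j - 1) ?_ (by linarith)
    rcases lt_or_gt_of_ne hx1 with hh | hh <;> rcases lt_or_gt_of_ne hy1 with hh' | hh'
    · exact Or.inl ⟨by linarith, by linarith⟩
    · linarith [h1.1 (by linarith)]
    · linarith [h1.2 (by linarith)]
    · exact Or.inr ⟨by linarith, by linarith⟩

/-- Points of one component cannot be separated by a level set that the complement avoids. -/
lemma lt_of_mem_component {x y : Fin n → ℝ} {i j : Fin n} {c : ℝ}
    (hc : ∀ z ∈ shiComp n, z i - z j ≠ c)
    (hx : x ∈ shiComp n) (hy : y ∈ connectedComponentIn (shiComp n) x) :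
    x i - x j < c ↔ y i - y j < c := by
  have hpre : IsPreconnected (connectedComponentIn (shiComp n) x) :=
    isPreconnected_connectedComponentIn
  have hxx := mem_connectedComponentIn hx
  have hcont : ContinuousOn (fun z : Fin n → ℝ => z i - z j)
      (connectedComponentIn (shiComp n) x) := by fun_prop
  have hsub := connectedComponentIn_subset (shiComp n) x
  constructor
  · intro h
    by_contra h'
    obtain ⟨z, hz, hzc⟩ := hpre.intermediate_value hxx hy hcont ⟨h.le, not_lt.1 h'⟩
    exact hc z (hsub hz) hzc
  · intro h
    by_contra h'
    obtain ⟨z, hz, hzc⟩ := hpre.intermediate_value hy hxx hcont ⟨h.le, not_lt.1 h'⟩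
    exact hc z (hsub hz) hzc

lemma sameSide_of_mem {x y : Fin n → ℝ} (hx : x ∈ shiComp n)
    (hy : y ∈ connectedComponentIn (shiComp n) x) : SameSide x y := by
  intro i j hij
  refine ⟨?_, lt_of_mem_component (fun z hz => (hz i j hij).2) hx hy⟩
  have := lt_of_mem_component (i := j) (j := i) (c := 0)
    (fun z hz h => (hz i j hij).1 (by linarith)) hx hy
  simpa using this

lemma component_eq_iff {x y : Fin n → ℝ} (hx : x ∈ shiComp n) (hy : y ∈ shiComp n) :
    connectedComponentIn (shiComp n) x = connectedComponentIn (shiComp n) y ↔ SameSide x y := by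
  constructor
  · intro h
    exact sameSide_of_mem hx (h ▸ mem_connectedComponentIn hy)
  · intro h
    apply connectedComponentIn_eq
    exact (convex_segment x y).isPreconnected.subset_connectedComponentIn
      (left_mem_segment ℝ x y) (segment_subset hx hy h) (right_mem_segment ℝ x y)

/-! ### Positions -/

lemma pos_lt_iff {x : Fin n → ℝ} {i j : Fin n} : pos x i < pos x j ↔ x j < x i := by
  have mono : ∀ {i j : Fin n}, x j ≤ x i → pos x i ≤ pos x j := by
    intro i j h
    apply card_le_card
    intro k
    simp only [mem_filter, mem_univ, true_and]
    exact fun hk => h.trans_lt hk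
  constructor
  · intro h
    by_contra h'
    exact absurd (mono (not_lt.1 h')) (not_le.2 h)
  · intro h
    apply card_lt_card
    rw [Finset.ssubset_iff_of_subset]
    · exact ⟨i, by simp [h], by simp⟩
    · intro k
      simp only [mem_filter, mem_univ, true_and]
      exact fun hk => h.trans hk

lemma pos_lt (x : Fin n → ℝ) (i : Fin n) : pos x i < n := by
  calc pos x i < #(univ : Finset (Fin n)) := by
        apply card_lt_card
        rw [Finset.ssubset_iff_of_subset (subset_univ _)]
        exact ⟨i, by simp, by simp⟩
    _ = n := by simp

lemma pos_inj {x : Fin n → ℝ} (hx : Function.Injective x) : Function.Injective (pos x) := by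
  intro i j h
  have h1 := pos_lt_iff (x := x) (i := i) (j := j)
  have h2 := pos_lt_iff (x := x) (i := j) (j := i)
  exact hx (le_antisymm (not_lt.1 fun h' => by have := h1.2 h'; omega)
    (not_lt.1 fun h' => by have := h2.2 h'; omega))

lemma exists_of_injective {p : Fin n → ℕ} (hp : Function.Injective p) (hlt : ∀ i, p i < n)
    {q : ℕ} (hq : q < n) : ∃ i, p i = q := by
  have hi : Function.Injective (fun i => (⟨p i, hlt i⟩ : Fin n)) :=
    fun i j h => hp (by simpa using h)
  obtain ⟨i, hi⟩ := (Finite.injective_iff_surjective.1 hi) ⟨q, hq⟩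
  exact ⟨i, by simpa using hi⟩

lemma card_lt_of_injective {p : Fin n → ℕ} (hp : Function.Injective p) (hlt : ∀ i, p i < n)
    {q : ℕ} (hq : q ≤ n) : #{i | p i < q} = q := by
  rw [← card_image_of_injective _ hp]
  have : image p {i | p i < q} = range q := by
    ext r
    simp only [mem_image, mem_filter, mem_univ, true_and, mem_range]
    constructor
    · rintro ⟨i, hi, rfl⟩; exact hi
    · intro hr
      obtain ⟨i, rfl⟩ := exists_of_injective hp hlt (hr.trans_le hq)
      exact ⟨i, hr, rfl⟩
  rw [this, card_range]

/-! ### Consecutive elements of fibres -/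

lemma Prev.left_unique {f : Fin n → ℕ} {k k' l : Fin n} (h : Prev f k l) (h' : Prev f k' l) :
    k = k' := by
  rcases lt_trichotomy k k' with hk | hk | hk
  · exact absurd h'.2.1 (h.2.2 k' hk h'.1)
  · exact hk
  · exact absurd h.2.1 (h'.2.2 k hk h.1)

lemma Prev.right_unique {f : Fin n → ℕ} {k l l' : Fin n} (h : Prev f k l) (h' : Prev f k l') :
    l = l' := by
  have := h.2.1
  have := h'.2.1
  rcases lt_trichotomy l l' with hk | hk | hk
  · exact absurd (by omega) (h'.2.2 l h.1 hk)
  · exact hk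
  · exact absurd (by omega) (h.2.2 l' h'.1 hk)

/-- Only the least element of a fibre has no predecessor. -/
lemma exists_prev {f : Fin n → ℕ} {k l : Fin n} (hkl : k < l) (hf : f k = f l) :
    ∃ m, Prev f m l := by
  classical
  have hne : ({m | m < l ∧ f m = f l} : Finset (Fin n)).Nonempty := ⟨k, by simp [hkl, hf]⟩
  have hmem := max'_mem _ hne
  set m := max' _ hne with hm
  simp only [mem_filter, mem_univ, true_and] at hmem
  refine ⟨m, hmem.1, hmem.2, fun m' h1 h2 h3 => ?_⟩
  have := le_max' _ m' (show m' ∈ ({m | m < l ∧ f m = f l} : Finset (Fin n)) by simp [h2, h3])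
  exact absurd h1 (not_lt.2 this)

/-! ### Properties of the label of a point -/

lemma Labels.congr {x y : Fin n → ℝ} {f : Fin n → ℕ} (hx : x ∈ shiComp n) (hy : y ∈ shiComp n)
    (h : SameSide x y) (hL : Labels x f) : Labels y f := by
  have hlt := h.lt_iff hx hy
  have hle : ∀ i j, x i ≤ x j ↔ y i ≤ y j := fun i j => by
    rw [← not_lt, ← not_lt, hlt]
  refine ⟨fun i hi => ?_, fun k l hkl => ?_, fun k l k' l' h1 h2 h3 => ?_,
    fun i j hij h1 h2 => ?_⟩
  · rw [hL.root i hi]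
    simp only [pos, hlt]
  · have := hL.arc k l hkl
    exact ⟨(hlt _ _).1 this.1, (h.sub_lt_iff hkl.1).1 this.2⟩
  · exact (hlt _ _).1 (hL.nonnest k l k' l' h1 h2 ((hlt _ _).2 h3))
  · obtain ⟨k, l, hkl, h3, h4⟩ := hL.cover i j hij ((hlt _ _).2 h1) ((h.sub_lt_iff hij).2 h2)
    exact ⟨k, l, hkl, (hle _ _).1 h3, (hle _ _).1 h4⟩

/-- An arc of one label of `x` is an arc of every label of `x`, as both are the maximal arcs. -/
lemma Labels.prev_imp {x : Fin n → ℝ} {f g : Fin n → ℕ} (hx : Function.Injective x)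
    (hf : Labels x f) (hg : Labels x g) {k l : Fin n} (h : Prev f k l) : Prev g k l := by
  obtain ⟨h1, h2⟩ := hf.arc k l h
  obtain ⟨k', l', h', hk', hl'⟩ := hg.cover k l h.1 h1 h2
  obtain ⟨h1', h2'⟩ := hg.arc k' l' h'
  obtain ⟨k'', l'', h'', hk'', hl''⟩ := hf.cover k' l' h'.1 h1' h2'
  have e1 : k'' = k := by
    by_contra hne
    have hlt : x k < x k'' := lt_of_le_of_ne (hk'.trans hk'') (fun e => hne (hx e).symm)
    have := hf.nonnest _ _ _ _ h'' h hlt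
    linarith
  subst e1
  have e2 := h.right_unique h''
  subst e2
  have e3 : k'' = k' := hx (le_antisymm hk' hk'')
  have e4 : l = l' := hx (le_antisymm hl'' hl')
  rw [e3, e4]; exact h'

lemma Labels.unique {x : Fin n → ℝ} {f g : Fin n → ℕ} (hx : Function.Injective x)
    (hf : Labels x f) (hg : Labels x g) : f = g := by
  funext i
  induction i using WellFoundedLT.induction with
  | ind i ih =>
    by_cases h : ∃ k, Prev f k i
    · obtain ⟨k, hk⟩ := h
      rw [← hk.2.1, ih k hk.1, (hf.prev_imp hx hg hk).2.1]
    · push Not at h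
      rw [hf.root i h, hg.root i fun k hk => h k (hg.prev_imp hx hf hk)]

lemma Labels.le_pos {x : Fin n → ℝ} {f : Fin n → ℕ} (hf : Labels x f) (i : Fin n) :
    f i ≤ pos x i := by
  induction i using WellFoundedLT.induction with
  | ind i ih =>
    by_cases h : ∃ k, Prev f k i
    · obtain ⟨k, hk⟩ := h
      rw [← hk.2.1]
      exact (ih k hk.1).trans (pos_lt_iff.2 (hf.arc k i hk).1).le
    · push Not at h
      exact (hf.root i h).le

lemma Labels.isPF {x : Fin n → ℝ} {f : Fin n → ℕ} (hx : Function.Injective x)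
    (hf : Labels x f) : IsPF n f := by
  intro k hk
  calc k = #{i | pos x i < k} := (card_lt_of_injective (pos_inj hx) (pos_lt x) hk).symm
    _ ≤ _ := by
      apply card_le_card
      intro i
      simp only [mem_filter, mem_univ, true_and]
      exact fun h => (hf.le_pos i).trans_lt h

lemma Labels.lt_iff {x : Fin n → ℝ} {f : Fin n → ℕ} (hf : Labels x f) {a b : Fin n}
    (ha : (a : ℕ) = 0) (hb : (b : ℕ) = 1) : f b < f a ↔ x a - x b < 0 := by
  have h0 : f a = pos x a :=
    hf.root _ fun k hk => by have := hk.1; rw [Fin.lt_def] at this; omega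
  by_cases h : ∃ k, Prev f k b
  · obtain ⟨k, hk⟩ := h
    have hka : k = a := by
      have := hk.1
      rw [Fin.lt_def] at this
      exact Fin.ext (by omega)
    subst hka
    have h1 := hk.2.1
    have h2 := (hf.arc _ _ hk).1
    constructor
    · intro h; omega
    · intro h; linarith
  · push Not at h
    rw [h0, hf.root _ h, pos_lt_iff, sub_neg]

/-- The positions of the labels are determined by `f`: position by position, a label without
predecessor is placed by its value of `f`, and among the pending successors the first-in-first-out
rule leaves no choice. -/
lemma Labels.pos_eq {x y : Fin n → ℝ} {f : Fin n → ℕ} (hx : Function.Injective x)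
    (hy : Function.Injective y) (hfx : Labels x f) (hfy : Labels y f) (i : Fin n) :
    pos x i = pos y i := by
  suffices ∀ p i, pos x i = p → pos y i = p from (this _ i rfl).symm
  intro p
  induction p using Nat.strong_induction_on with
  | _ p ih =>
  intro i hi
  have ih' : ∀ j, pos y j < p → pos x j = pos y j := by
    intro j hj
    obtain ⟨j', hj'⟩ := exists_of_injective (pos_inj hx) (pos_lt x) (pos_lt y j)
    have := ih _ hj j' hj'
    rw [← pos_inj hy this]; rw [hj', this]
  by_cases h : ∃ k, Prev f k i
  swap
  · push Not at h
    rw [← hfy.root i h, hfx.root i h, hi]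
  obtain ⟨k, hk⟩ := h
  have hki := pos_lt_iff.2 (hfx.arc k i hk).1
  have hkk := ih _ (hi ▸ hki) k rfl
  obtain ⟨j, hj⟩ := exists_of_injective (pos_inj hy) (pos_lt y) (hi ▸ pos_lt x i : p < n)
  by_contra hne
  have hij : i ≠ j := by rintro rfl; exact hne hj
  have hjx : p < pos x j := by
    rcases lt_trichotomy (pos x j) p with h | h | h
    · have := ih _ h j rfl; omega
    · exact absurd (pos_inj hx (hi.trans h.symm)) hij
    · exact h
  have hiy : p < pos y i := by
    rcases lt_trichotomy (pos y i) p with h | h | h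
    · have := ih' _ h; omega
    · exact absurd h hne
    · exact h
  by_cases h : ∃ k, Prev f k j
  swap
  · push Not at h
    have := hfy.root j h
    have := hfx.root j h
    omega
  obtain ⟨k', hk'⟩ := h
  have hkj := pos_lt_iff.2 (hfy.arc k' j hk').1
  have hkk' := ih' k' (hj ▸ hkj)
  rcases lt_trichotomy (pos x k) (pos x k') with h | h | h
  · have := pos_lt_iff.2 (hfy.nonnest k i k' j hk hk' (pos_lt_iff.1 (by omega)))
    omega
  · have := pos_inj hx h
    subst this
    exact hij (hk.right_unique hk')
  · have := pos_lt_iff.2 (hfx.nonnest k' j k i hk' hk (pos_lt_iff.1 h))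
    omega

lemma Labels.sameSide {x y : Fin n → ℝ} {f : Fin n → ℕ} (hx : x ∈ shiComp n)
    (hy : y ∈ shiComp n) (hfx : Labels x f) (hfy : Labels y f) : SameSide x y := by
  have hpos := hfx.pos_eq (inj_of_mem hx) (inj_of_mem hy) hfy
  have hlt : ∀ i j, x i < x j ↔ y i < y j := fun i j => by
    rw [← pos_lt_iff, ← pos_lt_iff, hpos, hpos]
  have hle : ∀ i j, x i ≤ x j ↔ y i ≤ y j := fun i j => by
    rw [← not_lt, ← not_lt, hlt]
  intro i j hij
  refine ⟨hlt j i, ?_⟩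
  by_cases h : x j < x i
  swap
  · have h' : ¬ y j < y i := fun h' => h ((hlt _ _).2 h')
    constructor <;> intro <;> linarith
  constructor
  · intro h1
    obtain ⟨k, l, hkl, h2, h3⟩ := hfx.cover i j hij h h1
    have := (hle _ _).1 h2
    have := (hle _ _).1 h3
    linarith [(hfy.arc k l hkl).2]
  · intro h1
    obtain ⟨k, l, hkl, h2, h3⟩ := hfy.cover i j hij ((hlt _ _).1 h) h1
    have := (hle _ _).2 h2
    have := (hle _ _).2 h3
    linarith [(hfx.arc k l hkl).2]

/-! ### Existence of the label of a point -/

/-- The pair `(i, j)` is an arc of `x`. -/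
def Arc (x : Fin n → ℝ) (i j : Fin n) : Prop := i < j ∧ x j < x i ∧ x i - x j < 1

/-- The arc `(k, l)` of `x` is contained in no other arc. -/
def MaxArc (x : Fin n → ℝ) (k l : Fin n) : Prop :=
  Arc x k l ∧ ∀ i j, Arc x i j → x k ≤ x i → x j ≤ x l → i = k ∧ j = l

open Classical in
/-- The position of the head of the chain of maximal arcs ending in `i`. -/
noncomputable def label (x : Fin n → ℝ) (i : Fin n) : ℕ :=
  if h : ∃ k, MaxArc x k i then label x h.choose else pos x i
termination_by i
decreasing_by exact h.choose_spec.1.1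

lemma MaxArc.left_unique {x : Fin n → ℝ} {k k' l : Fin n} (h : MaxArc x k l)
    (h' : MaxArc x k' l) : k = k' := by
  rcases le_total (x k) (x k') with hk | hk
  · exact (h.2 _ _ h'.1 hk le_rfl).1.symm
  · exact (h'.2 _ _ h.1 hk le_rfl).1

lemma MaxArc.right_unique {x : Fin n → ℝ} {k l l' : Fin n} (h : MaxArc x k l)
    (h' : MaxArc x k l') : l = l' := by
  rcases le_total (x l) (x l') with hk | hk
  · exact (h'.2 _ _ h.1 le_rfl hk).2
  · exact (h.2 _ _ h'.1 le_rfl hk).2.symm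

lemma exists_maxArc {x : Fin n → ℝ} (hx : Function.Injective x) {i j : Fin n} (h : Arc x i j) :
    ∃ k l, MaxArc x k l ∧ x i ≤ x k ∧ x l ≤ x j := by
  classical
  obtain ⟨⟨k, l⟩, hkl, hmax⟩ := Finset.exists_max_image
    ({p | Arc x p.1 p.2 ∧ x i ≤ x p.1 ∧ x p.2 ≤ x j} : Finset (Fin n × Fin n))
    (fun p => x p.1 - x p.2) ⟨(i, j), by simp [h]⟩
  simp only [mem_filter, mem_univ, true_and] at hkl hmax
  refine ⟨k, l, ⟨hkl.1, fun i' j' h' h1 h2 => ?_⟩, hkl.2⟩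
  have := hmax (i', j') ⟨h', hkl.2.1.trans h1, h2.trans hkl.2.2⟩
  simp only at this
  exact ⟨hx (by linarith), hx (by linarith)⟩

lemma label_eq {x : Fin n → ℝ} {k l : Fin n} (h : MaxArc x k l) : label x l = label x k := by
  have h' : ∃ k, MaxArc x k l := ⟨k, h⟩
  rw [label, dif_pos h', h'.choose_spec.left_unique h]

lemma label_of_root {x : Fin n → ℝ} {i : Fin n} (h : ∀ k, ¬ MaxArc x k i) :
    label x i = pos x i := by
  rw [label, dif_neg (by simpa using h)]

lemma le_of_chain {x : Fin n → ℝ} {i j : Fin n} (h : Relation.ReflTransGen (MaxArc x) i j) :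
    i ≤ j := by
  induction h with
  | refl => exact le_rfl
  | tail _ h ih => exact ih.trans h.1.1.le

lemma exists_root (x : Fin n → ℝ) (i : Fin n) :
    ∃ r, Relation.ReflTransGen (MaxArc x) r i ∧ label x i = pos x r := by
  induction i using WellFoundedLT.induction with
  | ind i ih =>
    by_cases h : ∃ k, MaxArc x k i
    · obtain ⟨k, hk⟩ := h
      obtain ⟨r, hr, hl⟩ := ih k hk.1.1
      exact ⟨r, hr.tail hk, by rw [label_eq hk, hl]⟩
    · push Not at h
      exact ⟨i, .refl, label_of_root h⟩

/-- Labels with the same value lie on the same chain. -/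
lemma exists_maxArc_of_label_eq {x : Fin n → ℝ} (hx : Function.Injective x) {i j : Fin n}
    (hij : i < j) (h : label x i = label x j) : ∃ k, MaxArc x k j ∧ i ≤ k := by
  obtain ⟨r, hr, h1⟩ := exists_root x i
  obtain ⟨s, hs, h2⟩ := exists_root x j
  have hrs : r = s := pos_inj hx (by rw [← h1, ← h2, h])
  subst hrs
  have hchain : Relation.ReflTransGen (MaxArc x) i j := by
    have hU : Relator.RightUnique (MaxArc x) := fun _ _ _ h h' => h.right_unique h'
    rcases Relation.ReflTransGen.total_of_right_unique hU hr hs with h | h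
    · exact h
    · exact absurd (le_of_chain h) (not_le.2 hij)
  rcases hchain.cases_tail with h | ⟨k, hk, hkj⟩
  · exact absurd h hij.ne'
  · exact ⟨k, hkj, le_of_chain hk⟩

lemma prev_label_iff {x : Fin n → ℝ} (hx : Function.Injective x) {k l : Fin n} :
    Prev (label x) k l ↔ MaxArc x k l := by
  constructor
  · intro h
    obtain ⟨k', hk', hle⟩ := exists_maxArc_of_label_eq hx h.1 h.2.1
    rcases hle.eq_or_lt with rfl | hlt
    · exact hk'
    · exact absurd (label_eq hk').symm (h.2.2 k' hlt hk'.1.1)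
  · intro h
    refine ⟨h.1.1, (label_eq h).symm, fun m h1 h2 h3 => ?_⟩
    obtain ⟨k', hk', hle⟩ := exists_maxArc_of_label_eq hx h2 h3
    rw [← h.left_unique hk'] at hle
    exact absurd h1 (not_lt.2 hle)

lemma exists_labels {x : Fin n → ℝ} (hx : Function.Injective x) : ∃ f, Labels x f := by
  refine ⟨label x, ?_, ?_, ?_, ?_⟩
  · intro i hi
    exact label_of_root fun k hk => hi k ((prev_label_iff hx).2 hk)
  · intro k l h
    exact ((prev_label_iff hx).1 h).1.2
  · intro k l k' l' h h' hlt
    rw [prev_label_iff hx] at h h'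
    by_contra hle
    have := (h'.2 _ _ h.1 hlt.le (not_lt.1 hle)).1
    subst this
    exact lt_irrefl _ hlt
  · intro i j hij h1 h2
    obtain ⟨k, l, h, h3⟩ := exists_maxArc hx ⟨hij, h1, h2⟩
    exact ⟨k, l, (prev_label_iff hx).2 h, h3⟩

/-! ### A point with a given label -/

/-- The first `p` values of `w` are the result of running the queue for `p` steps: step `q` places
the least element of the fibre of `q`, or, when that fibre is empty, the unplaced successor of the
earliest possible element. -/
structure Queue (f : Fin n → ℕ) (w : ℕ → Fin n) (p : ℕ) : Prop where
  inj : ∀ q < p, ∀ r < p, w q = w r → q = r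
  step : ∀ q < p, ((∀ k, ¬ Prev f k (w q)) ∧ f (w q) = q) ∨
    ((∀ i, f i ≠ q) ∧ ∃ q' < q, Prev f (w q') (w q) ∧
      ∀ r < q', ∀ i, Prev f (w r) i → ∃ s < q, w s = i)

/-- An unplaced element for the next step of the queue exists, by the parking condition. -/
lemma Queue.exists_next {f : Fin n → ℕ} (hf : IsPF n f) {w : ℕ → Fin n} {p : ℕ} (hp : p < n)
    (h : Queue f w p) : ∃ v, (∀ q < p, w q ≠ v) ∧ (((∀ k, ¬ Prev f k v) ∧ f v = p) ∨
      ((∀ i, f i ≠ p) ∧ ∃ q' < p, Prev f (w q') v ∧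
        ∀ r < q', ∀ i, Prev f (w r) i → ∃ s < p, w s = i)) := by
  classical
  by_cases hfib : ∃ i, f i = p
  · obtain ⟨v, hv, hmin⟩ := WellFounded.has_min (wellFounded_lt (α := Fin n)) {i | f i = p} hfib
    have hroot : ∀ k, ¬ Prev f k v := fun k hk => hmin k (hk.2.1.trans hv) hk.1
    refine ⟨v, ?_, Or.inl ⟨hroot, hv⟩⟩
    rintro q hq rfl
    rcases h.step q hq with ⟨-, h2⟩ | ⟨-, q', -, h2, -⟩
    · exact hq.ne (h2.symm.trans hv)
    · exact hroot _ h2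
  push Not at hfib
  -- At most `p` of the at least `p + 1` labels with `f i < p + 1` have been placed.
  have hun : ∃ i, f i < p + 1 ∧ ∀ q < p, w q ≠ i := by
    by_contra hcon
    push Not at hcon
    have h1 := hf (p + 1) hp
    have h2 : #{i | f i < p + 1} ≤ #((range p).image w) := by
      apply card_le_card
      intro i
      simp only [mem_filter, mem_univ, true_and, mem_image, mem_range]
      exact hcon i
    have h3 := h2.trans card_image_le
    rw [card_range] at h3
    omega
  obtain ⟨i, ⟨hi, hiu⟩, hmin⟩ := WellFounded.has_min (wellFounded_lt (α := Fin n))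
    {i | f i < p + 1 ∧ ∀ q < p, w q ≠ i} hun
  have hip : f i < p := lt_of_le_of_ne (Nat.lt_succ_iff.1 hi) (hfib i)
  have hprev : ∃ k, Prev f k i := by
    by_contra hno
    rcases h.step (f i) hip with ⟨h1, h2⟩ | ⟨h1, -⟩
    · rcases lt_trichotomy (w (f i)) i with hlt | heq | hlt
      · exact hno (exists_prev hlt h2)
      · exact hiu _ hip heq
      · obtain ⟨m, hm⟩ := exists_prev hlt h2.symm
        exact h1 m hm
    · exact h1 i rfl
  obtain ⟨k, hk⟩ := hprev
  have hkp : ∃ q < p, w q = k := by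
    by_contra hno
    push Not at hno
    exact hmin k ⟨by rw [hk.2.1]; exact hi, hno⟩ hk.1
  obtain ⟨q, hq, rfl⟩ := hkp
  have hex : ∃ q, q < p ∧ ∃ i, Prev f (w q) i ∧ ∀ s < p, w s ≠ i := ⟨q, hq, i, hk, hiu⟩
  obtain ⟨hq', v, hv, hvu⟩ := Nat.find_spec hex
  refine ⟨v, hvu, Or.inr ⟨hfib, _, hq', hv, fun r hr j hj => ?_⟩⟩
  by_contra hno
  push Not at hno
  exact Nat.find_min hex hr ⟨hr.trans hq', j, hj, hno⟩

lemma exists_queue {f : Fin n → ℕ} (hf : IsPF n f) (hn : 0 < n) (p : ℕ) (hp : p ≤ n) :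
    ∃ w, Queue f w p := by
  induction p with
  | zero => exact ⟨fun _ => ⟨0, hn⟩, by simp, by simp⟩
  | succ p ih =>
    obtain ⟨w, hw⟩ := ih (by omega)
    obtain ⟨v, hv, hstep⟩ := hw.exists_next hf hp
    have hlt : ∀ q < p, Function.update w p v q = w q := fun q hq =>
      Function.update_of_ne hq.ne _ _
    have heq : Function.update w p v p = v := Function.update_self _ _ _
    refine ⟨Function.update w p v, ?_, ?_⟩
    · intro q hq r hr h
      rcases Nat.lt_succ_iff_lt_or_eq.1 hq with hq | rfl <;>
        rcases Nat.lt_succ_iff_lt_or_eq.1 hr with hr | rfl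
      · rw [hlt q hq, hlt r hr] at h
        exact hw.inj q hq r hr h
      · rw [hlt q hq, heq] at h
        exact absurd h (hv q hq)
      · rw [hlt r hr, heq] at h
        exact absurd h.symm (hv r hr)
      · rfl
    · have key : ∀ q ≤ p, ∀ u, (((∀ k, ¬ Prev f k u) ∧ f u = q) ∨
          ((∀ i, f i ≠ q) ∧ ∃ q' < q, Prev f (w q') u ∧
            ∀ r < q', ∀ i, Prev f (w r) i → ∃ s < q, w s = i)) →
          (((∀ k, ¬ Prev f k u) ∧ f u = q) ∨
          ((∀ i, f i ≠ q) ∧ ∃ q' < q, Prev f (Function.update w p v q') u ∧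
            ∀ r < q', ∀ i, Prev f (Function.update w p v r) i →
              ∃ s < q, Function.update w p v s = i)) := by
        rintro q hq u (h | ⟨h1, q', hq', h2, h3⟩)
        · exact Or.inl h
        · refine Or.inr ⟨h1, q', hq', by rwa [hlt q' (by omega)], fun r hr i hi => ?_⟩
          rw [hlt r (by omega)] at hi
          obtain ⟨s, hs, rfl⟩ := h3 r hr i hi
          exact ⟨s, hs, hlt s (by omega)⟩
      intro q hq
      rcases Nat.lt_succ_iff_lt_or_eq.1 hq with hq | rfl
      · rw [hlt q hq]
        exact key q hq.le _ (hw.step q hq)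
      · rw [heq]
        exact key q le_rfl _ hstep

/-- The permutation produced by the queue, as positions of labels. -/
lemma exists_positions {f : Fin n → ℕ} (hf : IsPF n f) : ∃ p : Fin n → ℕ,
    Function.Injective p ∧ (∀ i, p i < n) ∧ (∀ i, (∀ k, ¬ Prev f k i) → f i = p i) ∧
    (∀ k l, Prev f k l → p k < p l) ∧
    ∀ k l k' l', Prev f k l → Prev f k' l' → p k < p k' → p l < p l' := by
  rcases Nat.eq_zero_or_pos n with rfl | hn
  · exact ⟨f, fun i => i.elim0, fun i => i.elim0, fun i => i.elim0, fun i => i.elim0,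
      fun i => i.elim0⟩
  obtain ⟨w, hw⟩ := exists_queue hf hn n le_rfl
  have hinj : Function.Injective (fun q : Fin n => w q) := fun q r h =>
    Fin.ext (hw.inj q q.2 r r.2 h)
  have hsurj := Finite.injective_iff_surjective.1 hinj
  choose p hp using hsurj
  simp only at hp
  have hpw : ∀ q, ∀ hq : q < n, (p (w q) : ℕ) = q := fun q hq =>
    hw.inj _ (p _).2 _ hq (hp _)
  refine ⟨fun i => p i, ?_, fun i => (p i).2, ?_, ?_, ?_⟩
  · intro i j h
    rw [← hp i, ← hp j]
    exact congrArg w h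
  · intro i hi
    rcases hw.step (p i) (p i).2 with ⟨-, h⟩ | ⟨-, q', -, h, -⟩
    · rwa [hp] at h
    · rw [hp] at h
      exact absurd h (hi _)
  · intro k l h
    rcases hw.step (p l) (p l).2 with ⟨h', -⟩ | ⟨-, q', hq', h', -⟩
    · rw [hp] at h'
      exact absurd h (h' _)
    · rw [hp] at h'
      beta_reduce
      rw [h.left_unique h', hpw q' (hq'.trans (p l).2)]
      exact hq'
  · intro k l k' l' h h' hlt
    beta_reduce at hlt ⊢
    rcases hw.step (p l') (p l').2 with ⟨h1, -⟩ | ⟨-, q', hq', h1, h2⟩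
    · rw [hp] at h1
      exact absurd h' (h1 _)
    · rw [hp] at h1
      have hq'n := hq'.trans (p l').2
      rw [h'.left_unique h1, hpw q' hq'n] at hlt
      obtain ⟨s, hs, rfl⟩ := h2 (p k) hlt l (by rwa [hp])
      rw [hpw s (hs.trans (p l').2)]
      exact hs

/-- For a family `S` of integer intervals closed under subintervals there is an increasing sequence
`t` of reals such that `t p - t q` is less than `1` when `[q, p]` is in `S`, and greater than `1`
otherwise. -/
lemma exists_sequence (S : ℕ → ℕ → Prop)
    (hS : ∀ q q' p' p, q ≤ q' → q' < p' → p' ≤ p → S q p → S q' p') (m : ℕ) :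
    ∃ t : ℕ → ℝ, ∀ q p, q < p → p < m →
      t q < t p ∧ (S q p → t p - t q < 1) ∧ (¬ S q p → 1 < t p - t q) := by
  classical
  induction m with
  | zero => exact ⟨0, by simp⟩
  | succ m ih =>
    obtain ⟨t, ht⟩ := ih
    obtain ⟨τ, hlo, hhi⟩ := Order.exists_between_finsets
      ((range m).image t ∪ ({q ∈ range m | ¬ S q m}).image fun q => t q + 1)
      (({q ∈ range m | S q m}).image fun q => t q + 1) (by
        intro a ha b hb
        simp only [mem_union, mem_image, mem_filter, mem_range] at ha hb
        obtain ⟨q, ⟨hq, hqS⟩, rfl⟩ := hb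
        rcases ha with ⟨r, hr, rfl⟩ | ⟨r, ⟨hr, hrS⟩, rfl⟩
        · rcases lt_or_ge q r with h | h
          · have := (ht q r h hr).2.1 (hS q q r m le_rfl h hr.le hqS)
            linarith
          · rcases h.eq_or_lt with rfl | h
            · linarith
            · have := (ht r q h hq).1
              linarith
        · have h : r < q := by
            by_contra h
            exact hrS (hS q r m m (not_lt.1 h) hr le_rfl hqS)
          have := (ht r q h hq).1
          linarith)
    refine ⟨Function.update t m τ, fun q p hqp hp => ?_⟩
    rcases Nat.lt_succ_iff_lt_or_eq.1 hp with hp | rfl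
    · rw [Function.update_of_ne hp.ne, Function.update_of_ne (hqp.trans hp).ne]
      exact ht q p hqp hp
    · rw [Function.update_self, Function.update_of_ne hqp.ne]
      refine ⟨hlo _ ?_, fun h => ?_, fun h => ?_⟩
      · simp only [mem_union, mem_image, mem_range]
        exact Or.inl ⟨q, hqp, rfl⟩
      · have := hhi (t q + 1) (by
          simp only [mem_image, mem_filter, mem_range]
          exact ⟨q, ⟨hqp, h⟩, rfl⟩)
        linarith
      · have := hlo (t q + 1) (by
          simp only [mem_union, mem_image, mem_filter, mem_range]
          exact Or.inr ⟨q, ⟨hqp, h⟩, rfl⟩)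
        linarith

lemma exists_point {f : Fin n → ℕ} (hf : IsPF n f) : ∃ x ∈ shiComp n, Labels x f := by
  obtain ⟨p, hinj, hlt, hroot, harc, hnest⟩ := exists_positions hf
  obtain ⟨t, ht⟩ := exists_sequence
    (fun q r => ∃ k l, Prev f k l ∧ p k ≤ q ∧ r ≤ p l)
    (fun q q' r' r h1 _ h3 ⟨k, l, h, h4, h5⟩ => ⟨k, l, h, h4.trans h1, h3.trans h5⟩) n
  have hx : ∀ i j, - t (p i) < - t (p j) ↔ p j < p i := by
    intro i j
    constructor
    · intro h
      by_contra h'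
      rcases (not_lt.1 h').eq_or_lt with h' | h'
      · rw [h'] at h; exact lt_irrefl _ h
      · linarith [(ht _ _ h' (hlt j)).1]
    · intro h
      linarith [(ht _ _ h (hlt i)).1]
  have hxle : ∀ i j, - t (p i) ≤ - t (p j) ↔ p j ≤ p i := fun i j => by
    rw [← not_lt, hx, not_lt]
  refine ⟨fun i => - t (p i), ?_, ?_, ?_, ?_, ?_⟩
  · intro i j hij
    simp only
    rcases lt_trichotomy (p i) (p j) with h | h | h
    · have := ht _ _ h (hlt j)
      refine ⟨fun h' => by linarith [this.1], fun h' => ?_⟩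
      by_cases hS : ∃ k l, Prev f k l ∧ p k ≤ p i ∧ p j ≤ p l
      · linarith [this.2.1 hS]
      · linarith [this.2.2 hS]
    · exact absurd (hinj h) hij.ne
    · have := (ht _ _ h (hlt i)).1
      constructor <;> intro h' <;> linarith
  · intro i hi
    rw [hroot i hi]
    simp only [pos, hx]
    exact (card_lt_of_injective hinj hlt (hlt i).le).symm
  · intro k l h
    have h1 := harc k l h
    have h2 := ht _ _ h1 (hlt l)
    refine ⟨(hx _ _).2 h1, ?_⟩
    have := h2.2.1 ⟨k, l, h, le_rfl, le_rfl⟩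
    linarith
  · intro k l k' l' h h' hk
    exact (hx _ _).2 (hnest k l k' l' h h' ((hx _ _).1 hk))
  · intro i j hij h1 h2
    have h3 := (hx _ _).1 h1
    by_cases hS : ∃ k l, Prev f k l ∧ p k ≤ p i ∧ p j ≤ p l
    · obtain ⟨k, l, h, h4, h5⟩ := hS
      exact ⟨k, l, h, (hxle _ _).2 h4, (hxle _ _).2 h5⟩
    · have := (ht _ _ h3 (hlt j)).2.2 hS
      linarith

end Shi

/-- The number of parking functions of length `n` with `a_1 > a_2` equals the
number of Shi regions with `x_1 - x_2 < 0`. -/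
theorem gt_parking_eq_lt_regions (n : ℕ) (hn : 2 ≤ n) :
    Set.ncard {a : Fin n → ℕ | IsPF n a ∧ a ⟨1, by omega⟩ < a ⟨0, by omega⟩} =
      Set.ncard {R : Set (Fin n → ℝ) | IsShiRegion n R ∧
        ∀ x ∈ R, x ⟨0, by omega⟩ - x ⟨1, by omega⟩ < 0} := by
  choose! X hX hL using fun a (ha : IsPF n a) => Shi.exists_point ha
  have hsign : ∀ x ∈ shiComp n, ∀ y ∈ connectedComponentIn (shiComp n) x,
      (x ⟨0, by omega⟩ - x ⟨1, by omega⟩ < 0 ↔ y ⟨0, by omega⟩ - y ⟨1, by omega⟩ < 0) :=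
    fun x hx y hy => Shi.lt_of_mem_component
      (fun z hz => (hz _ _ (by simp [Fin.lt_def])).1) hx hy
  refine Set.ncard_congr (fun a _ => connectedComponentIn (shiComp n) (X a)) ?_ ?_ ?_
  · rintro a ⟨ha, hlt⟩
    refine ⟨⟨X a, hX a ha, rfl⟩, fun y hy => ?_⟩
    exact (hsign _ (hX a ha) y hy).1 (((hL a ha).lt_iff rfl rfl).1 hlt)
  · rintro a b ⟨ha, -⟩ ⟨hb, -⟩ h
    have hs := (Shi.component_eq_iff (hX a ha) (hX b hb)).1 h
    exact Shi.Labels.unique (Shi.inj_of_mem (hX b hb))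
      ((hL a ha).congr (hX a ha) (hX b hb) hs) (hL b hb)
  · rintro R ⟨⟨x, hx, rfl⟩, hR⟩
    obtain ⟨f, hf⟩ := Shi.exists_labels (Shi.inj_of_mem hx)
    have hpf := hf.isPF (Shi.inj_of_mem hx)
    refine ⟨f, ⟨hpf, (hf.lt_iff rfl rfl).2 (hR x (mem_connectedComponentIn hx))⟩, ?_⟩
    exact (Shi.component_eq_iff (hX f hpf) hx).2 ((hL f hpf).sameSide (hX f hpf) hx hf)
end

section
/- For n ≥ 2, twice the number of parking functions a of length n with a_1 > a_2 equals n·(n+1)^{n−2}; equivalently, the number of parking functions with a_1 > a_2 (which equals the number with a_1 < a_2) is (1/2)((n+1)^{n−1} − (n+1)^{n−2}). -/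
namespace ParkingCircle

variable {n : ℕ}

/-- The lattice path on the circle `ZMod (n + 1)`, unrolled to `ℕ`: step number `j` goes up by the
number of indices `i` with `f i = j` and down by one. -/
def height (f : Fin n → ZMod (n + 1)) (t : ℕ) : ℤ :=
  ∑ j ∈ Finset.range t,
    (((Finset.univ.filter (fun i => f i = (j : ZMod (n + 1)))).card : ℤ) - 1)

lemma card_shift_lt (f : Fin n → ZMod (n + 1)) (t k : ℕ) (hk : k ≤ n + 1) :
    ((Finset.univ.filter (fun i => (f i - (t : ZMod (n + 1))).val < k)).card : ℤ)
      = height f (t + k) - height f t + k := by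
  have h1 : (Finset.univ.filter (fun i => (f i - (t : ZMod (n + 1))).val < k)).card
      = ∑ j ∈ Finset.range k,
        (Finset.univ.filter (fun i => f i = ((t + j : ℕ) : ZMod (n + 1)))).card := by
    rw [Finset.card_eq_sum_card_fiberwise
      (f := fun i => (f i - (t : ZMod (n + 1))).val) (t := Finset.range k)]
    · refine Finset.sum_congr rfl fun j hj => ?_
      have hj' := Finset.mem_range.1 hj
      congr 1
      ext i
      simp only [Finset.mem_filter, Finset.mem_univ, true_and]
      constructor
      · rintro ⟨-, h⟩
        rw [Nat.cast_add, ← h, ZMod.natCast_zmod_val]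
        ring
      · intro h
        have : (f i - (t : ZMod (n + 1))).val = j := by
          rw [h, Nat.cast_add, add_sub_cancel_left, ZMod.val_natCast_of_lt (by omega)]
        exact ⟨by omega, this⟩
    · intro i hi
      simpa using hi
  rw [h1, height, height, Finset.sum_range_add]
  push_cast
  simp

lemma isPF_shift_iff (f : Fin n → ZMod (n + 1)) (t : ℕ) :
    IsPF n (fun i => (f i - (t : ZMod (n + 1))).val) ↔
      ∀ k ≤ n, height f t ≤ height f (t + k) := by
  unfold IsPF
  refine forall_congr' fun k => forall_congr' fun hk => ?_
  have := card_shift_lt f t k (by omega)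
  beta_reduce
  omega

lemma height_add_period (f : Fin n → ZMod (n + 1)) (t : ℕ) :
    height f (t + (n + 1)) = height f t - 1 := by
  have h := card_shift_lt f t (n + 1) le_rfl
  rw [Finset.filter_true_of_mem (fun i _ => ZMod.val_lt _)] at h
  simp at h
  linarith

/-- Existence half of the cyclic lemma: shift to the first minimum of the path. -/
lemma exists_shift_isPF (f : Fin n → ZMod (n + 1)) :
    ∃ c : ZMod (n + 1), IsPF n (fun i => (f i - c).val) := by
  obtain ⟨m, hm, hmin⟩ := Finset.exists_min_image (Finset.range (n + 1)) (height f) ⟨0, by simp⟩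
  have hex : ∃ t, t < n + 1 ∧ height f t ≤ height f m := ⟨m, by simpa using hm, le_rfl⟩
  classical
  obtain ⟨ht, htm⟩ := Nat.find_spec hex
  have hfirst := fun s => Nat.find_min (H := hex) (m := s)
  generalize Nat.find hex = t at ht htm hfirst
  refine ⟨(t : ZMod (n + 1)), (isPF_shift_iff f t).2 fun k hk => ?_⟩
  by_cases hlt : t + k < n + 1
  · exact htm.trans (hmin _ (by simpa using hlt))
  · -- Past one full turn the path sits one lower, but before the first minimum it was
    -- strictly higher.
    obtain ⟨s, hs⟩ : ∃ s, t + k = s + (n + 1) := ⟨t + k - (n + 1), by omega⟩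
    have h1 := hfirst s (by omega)
    have h2 : height f m < height f s := by
      by_contra h
      exact h1 ⟨by omega, not_lt.1 h⟩
    rw [hs, height_add_period]
    omega

/-- Uniqueness half of the cyclic lemma. -/
lemma shift_unique (f : Fin n → ZMod (n + 1)) (c d : ZMod (n + 1))
    (hc : IsPF n (fun i => (f i - c).val)) (hd : IsPF n (fun i => (f i - d).val)) : c = d := by
  -- Two good starting points `s < t` would give `height s ≤ height t ≤ height (s + n + 1)`.
  have key : ∀ s t : ℕ, s < t → t < n + 1 →
      IsPF n (fun i => (f i - (s : ZMod (n + 1))).val) →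
      IsPF n (fun i => (f i - (t : ZMod (n + 1))).val) → False := by
    intro s t hst ht h1 h2
    rw [isPF_shift_iff] at h1 h2
    have a1 := h1 (t - s) (by omega)
    have a2 := h2 (s + (n + 1) - t) (by omega)
    rw [show s + (t - s) = t by omega] at a1
    rw [show t + (s + (n + 1) - t) = s + (n + 1) by omega, height_add_period] at a2
    omega
  rw [← ZMod.natCast_zmod_val c] at hc
  rw [← ZMod.natCast_zmod_val d] at hd
  rcases lt_trichotomy c.val d.val with h | h | h
  · exact (key _ _ h (ZMod.val_lt d) hc hd).elim
  · exact ZMod.val_injective _ h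
  · exact (key _ _ h (ZMod.val_lt c) hd hc).elim

lemma isPF_lt {a : Fin n → ℕ} (ha : IsPF n a) (i : Fin n) : a i < n := by
  have h := ha n le_rfl
  have h2 : Finset.univ.filter (fun i => a i < n) = Finset.univ := by
    apply Finset.eq_univ_of_card
    apply le_antisymm (Finset.card_le_univ _)
    simpa using h
  have h3 : i ∈ Finset.univ.filter (fun i => a i < n) := by
    rw [h2]
    exact Finset.mem_univ i
  simpa using h3

lemma isPF_comp_equiv {a : Fin n → ℕ} (σ : Equiv.Perm (Fin n)) (ha : IsPF n a) :
    IsPF n (a ∘ σ) := by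
  intro k hk
  refine (ha k hk).trans (le_of_eq ?_)
  refine (Finset.card_equiv σ fun i => ?_).symm
  simp

lemma finite_isPF (n : ℕ) : {a : Fin n → ℕ | IsPF n a}.Finite :=
  (Set.Finite.pi' fun _ => Set.finite_Iio n).subset fun _ ha i => isPF_lt ha i

/-- The circle argument: a parking function with `a x ≠ a y` together with a shift is the same as
an arbitrary `ZMod (n + 1)`-valued function with `f x ≠ f y`. -/
lemma ncard_ne_mul (x y : Fin n) :
    Set.ncard {a : Fin n → ℕ | IsPF n a ∧ a x ≠ a y} * (n + 1)
      = Nat.card {f : Fin n → ZMod (n + 1) // f x ≠ f y} := by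
  have hval : ∀ a : Fin n → ℕ, IsPF n a → ∀ i, ((a i : ℕ) : ZMod (n + 1)).val = a i :=
    fun a ha i => ZMod.val_natCast_of_lt ((isPF_lt ha i).trans (Nat.lt_succ_self n))
  let Φ : {a : Fin n → ℕ | IsPF n a ∧ a x ≠ a y} × ZMod (n + 1) →
      {f : Fin n → ZMod (n + 1) // f x ≠ f y} := fun p =>
    ⟨fun i => (p.1.1 i : ZMod (n + 1)) + p.2, by
      intro h
      apply p.1.2.2
      have := congrArg ZMod.val (add_right_cancel h)
      rwa [hval _ p.1.2.1, hval _ p.1.2.1] at this⟩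
  have hΦ : Function.Bijective Φ := by
    constructor
    · rintro ⟨⟨a, ha, hxy⟩, c⟩ ⟨⟨b, hb, hxy'⟩, d⟩ h
      have h' : ∀ i, (a i : ZMod (n + 1)) + c = (b i : ZMod (n + 1)) + d :=
        fun i => congrFun (congrArg Subtype.val h) i
      have hcd : c = d := by
        apply shift_unique (fun i => (a i : ZMod (n + 1)) + c)
        · simpa [hval a ha] using ha
        · simpa [h', hval b hb] using hb
      subst hcd
      have hab : a = b := by
        funext i
        have := congrArg ZMod.val (add_right_cancel (h' i))
        rwa [hval a ha, hval b hb] at this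
      subst hab
      rfl
    · rintro ⟨f, hf⟩
      obtain ⟨c, hc⟩ := exists_shift_isPF f
      refine ⟨⟨⟨fun i => (f i - c).val, hc, fun h => hf ?_⟩, c⟩, ?_⟩
      · exact sub_left_injective (ZMod.val_injective _ h)
      · apply Subtype.ext
        funext i
        simp [Φ]
  rw [← Nat.card_eq_of_bijective Φ hΦ, Nat.card_prod, Nat.card_zmod, Nat.card_coe_set_eq]

lemma card_fun_ne (m : ℕ) (Z : Type*) [Fintype Z] :
    Nat.card {f : Fin (m + 2) → Z // f 0 ≠ f 1} + Fintype.card Z ^ (m + 1)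
      = Fintype.card Z ^ (m + 2) := by
  classical
  -- A function with `f 0 = f 1` is determined by its tail.
  have h1 : Fintype.card {f : Fin (m + 2) → Z // f 0 = f 1} = Fintype.card Z ^ (m + 1) := by
    have e : {f : Fin (m + 2) → Z // f 0 = f 1} ≃ (Fin (m + 1) → Z) :=
      { toFun := fun f => Fin.tail f.1
        invFun := fun g => ⟨Fin.cons (g 0) g, by
          rw [← Fin.succ_zero_eq_one, Fin.cons_zero, Fin.cons_succ]⟩
        left_inv := by
          rintro ⟨f, hf⟩
          apply Subtype.ext
          have : Fin.tail f 0 = f 0 := by rw [hf]; rfl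
          simp only [this, Fin.cons_self_tail]
        right_inv := fun g => by simp }
    simp [Fintype.card_congr e]
  have h2 := Fintype.card_subtype_compl (fun f : Fin (m + 2) → Z => f 0 = f 1)
  have h3 := Fintype.card_subtype_le (fun f : Fin (m + 2) → Z => f 0 = f 1)
  rw [Nat.card_eq_fintype_card]
  have h4 : Fintype.card (Fin (m + 2) → Z) = Fintype.card Z ^ (m + 2) := by simp
  simp only [ne_eq]
  rw [h1, h4] at h2 h3
  omega

lemma ncard_lt_swap (x y : Fin n) :
    Set.ncard {a : Fin n → ℕ | IsPF n a ∧ a y < a x}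
      = Set.ncard {a : Fin n → ℕ | IsPF n a ∧ a x < a y} := by
  refine Set.ncard_congr (fun a _ => a ∘ Equiv.swap x y) ?_ ?_ ?_
  · rintro a ⟨ha, h⟩
    exact ⟨isPF_comp_equiv _ ha, by simpa using h⟩
  · intro a b _ _ h
    exact (Equiv.swap x y).surjective.injective_comp_right h
  · rintro b ⟨hb, h⟩
    refine ⟨b ∘ Equiv.swap x y, ⟨isPF_comp_equiv _ hb, by simpa using h⟩, ?_⟩
    funext i
    simp

lemma ncard_ne_split (x y : Fin n) :
    Set.ncard {a : Fin n → ℕ | IsPF n a ∧ a x ≠ a y}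
      = 2 * Set.ncard {a : Fin n → ℕ | IsPF n a ∧ a y < a x} := by
  have hu : {a : Fin n → ℕ | IsPF n a ∧ a x ≠ a y}
      = {a | IsPF n a ∧ a y < a x} ∪ {a | IsPF n a ∧ a x < a y} := by
    ext a
    simp only [Set.mem_ofPred_eq, Set.mem_union, ← and_or_left, ne_eq]
    exact and_congr_right fun _ => by omega
  have hd : Disjoint {a : Fin n → ℕ | IsPF n a ∧ a y < a x} {a | IsPF n a ∧ a x < a y} :=
    Set.disjoint_left.2 fun a h h' => lt_asymm h.2 h'.2
  rw [hu, Set.ncard_union_eq hd ((finite_isPF n).subset fun _ h => h.1)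
    ((finite_isPF n).subset fun _ h => h.1), ← ncard_lt_swap x y, two_mul]

end ParkingCircle

open ParkingCircle in
/-- Twice the number of parking functions of length `n` with `a_1 > a_2` equals
`n * (n+1)^(n-2)`; equivalently, this number (which equals the number with
`a_1 < a_2`) is `((n+1)^(n-1) - (n+1)^(n-2)) / 2`. -/
theorem gt_parking_count_formula (n : ℕ) (hn : 2 ≤ n) :
    2 * Set.ncard {a : Fin n → ℕ | IsPF n a ∧ a ⟨1, by omega⟩ < a ⟨0, by omega⟩} =
        n * (n + 1) ^ (n - 2) ∧
      Set.ncard {a : Fin n → ℕ | IsPF n a ∧ a ⟨1, by omega⟩ < a ⟨0, by omega⟩} =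
        Set.ncard {a : Fin n → ℕ | IsPF n a ∧ a ⟨0, by omega⟩ < a ⟨1, by omega⟩} ∧
      Set.ncard {a : Fin n → ℕ | IsPF n a ∧ a ⟨1, by omega⟩ < a ⟨0, by omega⟩} =
        ((n + 1) ^ (n - 1) - (n + 1) ^ (n - 2)) / 2 := by
  obtain ⟨m, rfl⟩ : ∃ m, n = m + 2 := ⟨n - 2, by omega⟩
  have h1 := ncard_ne_mul (n := m + 2) ⟨0, by omega⟩ ⟨1, by omega⟩
  rw [ncard_ne_split] at h1
  have h2 := card_fun_ne m (ZMod (m + 2 + 1))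
  rw [ZMod.card] at h2
  have key : 2 * Set.ncard {a : Fin (m + 2) → ℕ |
      IsPF (m + 2) a ∧ a ⟨1, by omega⟩ < a ⟨0, by omega⟩} = (m + 2) * (m + 2 + 1) ^ m := by
    apply Nat.eq_of_mul_eq_mul_right (Nat.succ_pos (m + 2))
    refine h1.trans (Nat.add_right_cancel (h2.trans ?_))
    simp only [Nat.succ_eq_add_one]
    ring
  refine ⟨key, ncard_lt_swap _ _, ?_⟩
  have h3 : (m + 2 + 1) ^ (m + 2 - 1) = (m + 2) * (m + 2 + 1) ^ m + (m + 2 + 1) ^ m := by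
    rw [show m + 2 - 1 = m + 1 by omega]
    ring
  rw [h3, show m + 2 - 2 = m by omega, Nat.add_sub_cancel, ← key]
  omega
end
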